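/- arXiv:2203.03696 — 6 statements merged into one kernel-verified Lean document; each statement's English description precedes it below -/
import Mathlib

section
/- Oscillation Theorem: For every potential V : ℤ → ℝ, every N ≥ 1, and every E ∈ ℝ, the number of eigenvalues of H_N that are strictly greater than E (i.e., the cardinality of {z ∈ ℝ : z is an eigenvalue of H_N and z > E}) equals F_N(E), where F_N(E) = #{1 ≤ j ≤ N : sgn(u_E(j)) ≠ sgn(u_E(j+1))} if E is not an eigenvalue of H_N, and F_N(E) = #{1 ≤ j ≤ N−1 : sgn(u_E(j)) ≠ sgn(u_E(j+1))} if E is an eigenvalue of H_N; here sgn(x) = 1 for x ≥ 0 and sgn(x) = −1 for x < 0. -/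
/-! The solution `u_z n` is a monic polynomial in `z` of degree `n - 1` (`dirichletPoly`), and the
eigenvalues of `H_N` are the roots of the one at site `N + 1` (`isEigenvalueOf_iff`), so the theorem
is a Sturm count for this sequence of polynomials.

The Wronskian in `z` of two consecutive polynomials is positive (`dirichletPoly_wronskian_pos`).
Hence all real roots are simple and consecutive polynomials have interlacing roots, which is used
only in this form: passing from one site to the next raises the number of roots above `E` by `0`
or `1` (`rootsAbove_card_le_succ`, `rootsAbove_card_succ_le`). A monic polynomial with simple real
roots is negative at a non-root `E` exactly when the number of its roots above `E` is odd
(`dirichletPoly_eval_neg_iff`). So the increment is `1` exactly when `u_E` changes sign. If `u_E`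
vanishes at a site, its values at the two neighbouring sites are opposite, and parity applied to
the double step gives a total increment of `1`, which is also the number of flips seen by `sgn`
there, whichever sign comes first.

If `E` is an eigenvalue, then it is a root at site `N + 1` lying below those counted, and
interlacing with it included shows that the last step has increment `0`
(`rootsAbove_card_succ_le_of_root`). -/

/-- The `N×N` Dirichlet truncation of the Schrödinger operator with potential `V`:
diagonal entries `V 1, …, V N`, and all entries on the first sub- and
super-diagonal equal to `1` (all other entries `0`). -/
def dirichletMatrix (V : ℤ → ℝ) (N : ℕ) : Matrix (Fin N) (Fin N) ℝ :=
  Matrix.of fun i j =>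
    if (i : ℕ) = (j : ℕ) then V ((i : ℕ) + 1)
    else if (i : ℕ) + 1 = (j : ℕ) ∨ (j : ℕ) + 1 = (i : ℕ) then 1 else 0

/-- `z` is an eigenvalue of the real square matrix `M`. -/
def IsEigenvalueOf {N : ℕ} (M : Matrix (Fin N) (Fin N) ℝ) (z : ℝ) : Prop :=
  ∃ v : Fin N → ℝ, v ≠ 0 ∧ M.mulVec v = z • v

/-- `sgn x = 1` for `x ≥ 0` and `sgn x = -1` for `x < 0`. -/
noncomputable def sgn (x : ℝ) : ℝ := if x < 0 then -1 else 1

/-! ### The Dirichlet solution as a polynomial in the energy -/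

open Polynomial in
/-- The Dirichlet solution as a polynomial in the energy: the value of `dirichletPoly V n` at `z`
is `u_z n`. The index is the lattice site, so `dirichletPoly V (n + 1)` has degree `n`. -/
noncomputable def dirichletPoly (V : ℤ → ℝ) : ℕ → ℝ[X]
  | 0 => 0
  | 1 => 1
  | n + 2 => (X - C (V ((n + 1 : ℕ) : ℤ))) * dirichletPoly V (n + 1) - dirichletPoly V n

open Polynomial in
theorem dirichletPoly_succ_succ_eval (V : ℤ → ℝ) (n : ℕ) (z : ℝ) :
    (dirichletPoly V (n + 2)).eval z
      = (z - V ((n + 1 : ℕ) : ℤ)) * (dirichletPoly V (n + 1)).eval z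
        - (dirichletPoly V n).eval z := by
  simp [dirichletPoly]

theorem dirichletPoly_eval (V : ℤ → ℝ) (E : ℝ) (u : ℤ → ℝ)
    (hu : ∀ m : ℤ, u (m - 1) + u (m + 1) + V m * u m = E * u m)
    (h0 : u 0 = 0) (h1 : u 1 = 1) (n : ℕ) :
    (dirichletPoly V n).eval E = u n := by
  induction n using Nat.twoStepInduction with
  | zero => simp [dirichletPoly, h0]
  | one => simp [dirichletPoly, h1]
  | more n ih0 ih1 =>
    rw [dirichletPoly_succ_succ_eval, ih0, ih1]
    have h := hu ((n + 1 : ℕ) : ℤ)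
    have e1 : (((n + 1 : ℕ) : ℤ) - 1) = (n : ℤ) := by push_cast; ring
    have e2 : (((n + 1 : ℕ) : ℤ) + 1) = ((n + 2 : ℕ) : ℤ) := by push_cast; ring
    rw [e1, e2] at h
    linarith

open Polynomial in
/-- The third conjunct is what keeps the leading term of the recursion from being affected by
`dirichletPoly V n`; it is phrased with `degree` so that it covers `dirichletPoly V 0 = 0`. -/
theorem dirichletPoly_monic_natDegree (V : ℤ → ℝ) (n : ℕ) :
    (dirichletPoly V (n + 1)).Monic ∧ (dirichletPoly V (n + 1)).natDegree = n ∧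
      (dirichletPoly V n).degree < (n : WithBot ℕ) := by
  induction n with
  | zero => simp [dirichletPoly]
  | succ n ih =>
    obtain ⟨hm, hd, hl⟩ := ih
    have hdeg : (dirichletPoly V (n + 1)).degree = n := by
      rw [degree_eq_natDegree hm.ne_zero, hd]
    have hprod : ((X - C (V ((n + 1 : ℕ) : ℤ))) * dirichletPoly V (n + 1)).Monic :=
      (monic_X_sub_C _).mul hm
    have hpd : ((X - C (V ((n + 1 : ℕ) : ℤ))) * dirichletPoly V (n + 1)).natDegree = n + 1 := by
      rw [(monic_X_sub_C _).natDegree_mul hm, natDegree_X_sub_C, hd, add_comm]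
    have hlt : (dirichletPoly V n).degree
        < ((X - C (V ((n + 1 : ℕ) : ℤ))) * dirichletPoly V (n + 1)).degree := by
      rw [degree_eq_natDegree hprod.ne_zero, hpd]
      exact hl.trans (by exact_mod_cast Nat.lt_succ_self n)
    refine ⟨hprod.sub_of_left hlt, ?_, ?_⟩
    · have := degree_sub_eq_left_of_degree_lt hlt
      have h2 := natDegree_eq_natDegree this
      rw [hpd] at h2
      exact h2
    · rw [hdeg]; exact_mod_cast Nat.lt_succ_self n

theorem dirichletPoly_monic (V : ℤ → ℝ) {n : ℕ} (hn : 1 ≤ n) : (dirichletPoly V n).Monic := by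
  obtain ⟨m, rfl⟩ := Nat.exists_eq_add_of_le' hn
  exact (dirichletPoly_monic_natDegree V m).1

/-! ### Wronskian positivity and roots between roots -/

open Polynomial in
/-- The Christoffel–Darboux identity says that this Wronskian equals
`∑ k ∈ Icc 1 n, (dirichletPoly V k).eval z ^ 2`; the term `k = 1` makes it positive. -/
theorem dirichletPoly_wronskian_pos (V : ℤ → ℝ) {n : ℕ} (hn : 1 ≤ n) (z : ℝ) :
    0 < (derivative (dirichletPoly V (n + 1))).eval z * (dirichletPoly V n).eval z
      - (dirichletPoly V (n + 1)).eval z * (derivative (dirichletPoly V n)).eval z := by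
  induction n, hn using Nat.le_induction with
  | base => simp [dirichletPoly]
  | succ n _ ih =>
    simp only [dirichletPoly, derivative_sub, derivative_mul, derivative_X, derivative_C,
      eval_sub, eval_mul, eval_add, eval_X, eval_C, sub_zero, one_mul] at ih ⊢
    nlinarith [sq_nonneg ((dirichletPoly V (n + 1)).eval z)]

open Polynomial in
theorem exists_root_of_monic_of_eval_nonpos {p : ℝ[X]} (hp : p.Monic) {a : ℝ}
    (ha : p.eval a ≤ 0) : ∃ z, a ≤ z ∧ p.eval z = 0 := by
  by_cases hd : p.degree ≤ 0
  · have : p = 1 := hp.degree_le_zero_iff_eq_one.mp hd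
    rw [this] at ha
    norm_num at ha
  · have ht : Filter.Tendsto (fun x => p.eval x) Filter.atTop Filter.atTop :=
      p.tendsto_atTop_of_leadingCoeff_nonneg (not_le.mp hd) (by rw [hp.leadingCoeff]; norm_num)
    obtain ⟨b, hb, hb'⟩ := ((ht.eventually_ge_atTop 0).and (Filter.eventually_ge_atTop a)).exists
    obtain ⟨z, hz, hz'⟩ := intermediate_value_Icc hb' p.continuous.continuousOn ⟨ha, hb⟩
    exact ⟨z, hz.1, hz'⟩

open Polynomial in
/-- If the Wronskian of `f` and `g` never vanishes, then `g` has a root strictly between any two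
roots of `f`: otherwise Rolle's theorem applies to `f / g`, whose derivative is the Wronskian
divided by `g ^ 2`. -/
theorem exists_root_between {f g : ℝ[X]}
    (hW : ∀ z, (derivative f).eval z * g.eval z - f.eval z * (derivative g).eval z ≠ 0)
    {x y : ℝ} (hxy : x < y) (hx : f.eval x = 0) (hy : f.eval y = 0) :
    ∃ z, x < z ∧ z < y ∧ g.eval z = 0 := by
  by_contra! hno
  have hg : ∀ z ∈ Set.Icc x y, g.eval z ≠ 0 := by
    intro z hz h
    rcases hz.1.eq_or_lt with rfl | h1
    · exact hW x (by rw [hx, h]; ring)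
    rcases hz.2.eq_or_lt with rfl | h2
    · exact hW z (by rw [hy, h]; ring)
    exact hno z h1 h2 h
  obtain ⟨c, hc, hc'⟩ := exists_hasDerivAt_eq_zero (f := fun z => f.eval z / g.eval z)
    (f' := fun z => ((derivative f).eval z * g.eval z - f.eval z * (derivative g).eval z)
      / g.eval z ^ 2) hxy
    (f.continuous.continuousOn.div g.continuous.continuousOn hg) (by simp [hx, hy])
    (fun z hz => (f.hasDerivAt z).div (g.hasDerivAt z) (hg z ⟨hz.1.le, hz.2.le⟩))
  exact div_ne_zero (hW c) (pow_ne_zero 2 (hg c ⟨hc.1.le, hc.2.le⟩)) hc'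

/-! ### Interlacing in terms of root counts -/

/-- The set of roots of `dirichletPoly V n` that exceed `E`. -/
noncomputable def rootsAbove (V : ℤ → ℝ) (n : ℕ) (E : ℝ) : Finset ℝ :=
  (dirichletPoly V n).roots.toFinset.filter (E < ·)

theorem mem_rootsAbove (V : ℤ → ℝ) {n : ℕ} (hn : 1 ≤ n) (E z : ℝ) :
    z ∈ rootsAbove V n E ↔ (dirichletPoly V n).eval z = 0 ∧ E < z := by
  simp [rootsAbove, (dirichletPoly_monic V hn).ne_zero]

theorem rootsAbove_card_succ_le (V : ℤ → ℝ) {n : ℕ} (hn : 1 ≤ n) (E : ℝ) :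
    (rootsAbove V (n + 1) E).card ≤ (rootsAbove V n E).card + 1 := by
  refine Finset.card_le_of_interleaved fun x hx y hy hxy _ => ?_
  rw [mem_rootsAbove V (by omega)] at hx hy
  obtain ⟨z, h1, h2, h3⟩ := exists_root_between
    (fun z => (dirichletPoly_wronskian_pos V hn z).ne') hxy hx.1 hy.1
  exact ⟨z, (mem_rootsAbove V hn E z).2 ⟨h3, hx.2.trans h1⟩, h1, h2⟩

/-- When `E` itself is a root it can be added to the interlaced set, which gains one over
`rootsAbove_card_succ_le`. -/
theorem rootsAbove_card_succ_le_of_root (V : ℤ → ℝ) {n : ℕ} (hn : 1 ≤ n) {E : ℝ}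
    (hE : (dirichletPoly V (n + 1)).eval E = 0) :
    (rootsAbove V (n + 1) E).card ≤ (rootsAbove V n E).card := by
  have hnot : E ∉ rootsAbove V (n + 1) E := by
    rw [mem_rootsAbove V (by omega)]; simp
  have key : (insert E (rootsAbove V (n + 1) E)).card ≤ (rootsAbove V n E).card + 1 := by
    have hins : ∀ x ∈ insert E (rootsAbove V (n + 1) E),
        (dirichletPoly V (n + 1)).eval x = 0 ∧ E ≤ x := by
      intro x hx
      rcases Finset.mem_insert.1 hx with rfl | hx
      · exact ⟨hE, le_rfl⟩
      · rw [mem_rootsAbove V (by omega)] at hx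
        exact ⟨hx.1, hx.2.le⟩
    refine Finset.card_le_of_interleaved fun x hx y hy hxy _ => ?_
    obtain ⟨z, h1, h2, h3⟩ := exists_root_between
      (fun z => (dirichletPoly_wronskian_pos V hn z).ne') hxy (hins x hx).1 (hins y hy).1
    exact ⟨z, (mem_rootsAbove V hn E z).2 ⟨h3, (hins x hx).2.trans_lt h1⟩, h1, h2⟩
  rw [Finset.card_insert_of_notMem hnot] at key
  omega

open Polynomial in
/-- Above the largest root of `dirichletPoly V n` there is a further root of the next polynomial:
at `y` the first has nonnegative derivative, so positivity of the Wronskian makes the second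
negative there, while it is positive near `+∞`. -/
theorem exists_root_succ_gt (V : ℤ → ℝ) {n : ℕ} (hn : 1 ≤ n) {y : ℝ}
    (hy : (dirichletPoly V n).eval y = 0)
    (hmax : ∀ z, y < z → (dirichletPoly V n).eval z ≠ 0) :
    ∃ z, y < z ∧ (dirichletPoly V (n + 1)).eval z = 0 := by
  have hW := dirichletPoly_wronskian_pos V hn y
  rw [hy] at hW
  -- At `y` the cofactor of `X - y` takes the value of the derivative of `dirichletPoly V n`.
  obtain ⟨q, hq⟩ := dvd_iff_isRoot.2 hy
  have hqm : q.Monic := (monic_X_sub_C y).of_mul_monic_left (hq ▸ dirichletPoly_monic V hn)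
  have hder : (derivative (dirichletPoly V n)).eval y = q.eval y := by
    rw [hq]; simp [derivative_mul]
  rw [hder] at hW
  have hqy : 0 < q.eval y := by
    by_contra! hneg
    obtain ⟨z, hz, hz'⟩ := exists_root_of_monic_of_eval_nonpos hqm hneg
    rcases hz.eq_or_lt with rfl | hlt
    · rw [hz'] at hW; simp at hW
    · exact hmax z hlt (by rw [hq]; simp [hz'])
  have hneg : (dirichletPoly V (n + 1)).eval y < 0 := by
    by_contra! h
    nlinarith [mul_nonneg h hqy.le]
  obtain ⟨z, hz, hz'⟩ :=
    exists_root_of_monic_of_eval_nonpos (dirichletPoly_monic V (by omega)) hneg.le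
  refine ⟨z, lt_of_le_of_ne hz ?_, hz'⟩
  rintro rfl
  exact hneg.ne hz'

/-- The roots above `E`, completed by a point beyond all roots in play, are interlaced by the
roots of the next polynomial. -/
theorem rootsAbove_card_le_succ (V : ℤ → ℝ) {n : ℕ} (hn : 1 ≤ n) (E : ℝ) :
    (rootsAbove V n E).card ≤ (rootsAbove V (n + 1) E).card := by
  obtain ⟨B, hB⟩ := (rootsAbove V n E ∪ rootsAbove V (n + 1) E).exists_le
  have hB1 : ∀ x ∈ rootsAbove V n E, x < B + 1 := fun x hx => by
    linarith [hB x (Finset.mem_union_left _ hx)]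
  have hB2 : ∀ x ∈ rootsAbove V (n + 1) E, x < B + 1 := fun x hx => by
    linarith [hB x (Finset.mem_union_right _ hx)]
  have hnot : B + 1 ∉ rootsAbove V n E := fun h => (hB1 _ h).false
  have key : (insert (B + 1) (rootsAbove V n E)).card ≤ (rootsAbove V (n + 1) E).card + 1 := by
    refine Finset.card_le_of_interleaved fun x hx y hy hxy hcons => ?_
    have hx' : x ∈ rootsAbove V n E := by
      rcases Finset.mem_insert.1 hx with rfl | hx
      · rcases Finset.mem_insert.1 hy with rfl | hy
        · exact absurd hxy (lt_irrefl _)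
        · exact absurd (hB1 y hy) hxy.le.not_gt
      · exact hx
    have hx0 := (mem_rootsAbove V hn E x).1 hx'
    rcases Finset.mem_insert.1 hy with rfl | hy
    · obtain ⟨z, hz, hz'⟩ := exists_root_succ_gt V hn hx0.1 (fun z hz hz' => by
        have hmem := (mem_rootsAbove V hn E z).2 ⟨hz', hx0.2.trans hz⟩
        exact hcons z (Finset.mem_insert_of_mem hmem) ⟨hz, hB1 z hmem⟩)
      have hmem := (mem_rootsAbove V (n := n + 1) (by omega) E z).2 ⟨hz', hx0.2.trans hz⟩
      exact ⟨z, hmem, hz, hB2 z hmem⟩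
    · have hy0 := (mem_rootsAbove V hn E y).1 hy
      obtain ⟨z, h1, h2, h3⟩ := exists_root_between (f := dirichletPoly V n)
        (g := dirichletPoly V (n + 1))
        (fun z h => (dirichletPoly_wronskian_pos V hn z).ne' (by linarith)) hxy hx0.1 hy0.1
      exact ⟨z, (mem_rootsAbove V (by omega) E z).2 ⟨h3, hx0.2.trans h1⟩, h1, h2⟩
  rw [Finset.card_insert_of_notMem hnot] at key
  omega

/-! ### Sign and parity -/

open Polynomial in
/-- At a multiple root the Wronskian would vanish. -/
theorem dirichletPoly_nodup_roots (V : ℤ → ℝ) {n : ℕ} (hn : 1 ≤ n) :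
    (dirichletPoly V n).roots.Nodup := by
  rw [Multiset.nodup_iff_count_le_one]
  intro z
  rw [count_roots]
  by_contra! h
  obtain ⟨h1, h2⟩ :=
    (one_lt_rootMultiplicity_iff_isRoot (dirichletPoly_monic V hn).ne_zero).1 h
  have hW := dirichletPoly_wronskian_pos V hn z
  rw [IsRoot.def] at h1 h2
  rw [h1, h2] at hW
  simp at hW

theorem prod_sub_neg_iff (s : Finset ℝ) (E : ℝ) (hE : E ∉ s) :
    (∏ x ∈ s, (E - x) ≠ 0) ∧ (∏ x ∈ s, (E - x) < 0 ↔ Odd (s.filter (E < ·)).card) := by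
  induction s using Finset.induction_on with
  | empty => simp
  | insert a s ha ih =>
    rw [Finset.mem_insert, not_or] at hE
    obtain ⟨h0, h1⟩ := ih hE.2
    rw [Finset.prod_insert ha, Finset.filter_insert]
    have hne : E - a ≠ 0 := sub_ne_zero.2 hE.1
    refine ⟨mul_ne_zero hne h0, ?_⟩
    split_ifs with hlt
    · rw [Finset.card_insert_of_notMem (by simp [ha]), Nat.odd_add_one, ← h1, not_lt,
        mul_neg_iff]
      constructor
      · rintro (h | h)
        · linarith [h.1]
        · exact h.2.le
      · exact fun h => Or.inr ⟨by linarith, lt_of_le_of_ne h h0.symm⟩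
    · have hpos : 0 < E - a := lt_of_le_of_ne (by linarith [not_lt.1 hlt]) hne.symm
      rw [← h1, mul_neg_iff]
      constructor
      · rintro (h | h)
        · exact h.2
        · linarith [h.1]
      · exact fun h => Or.inl ⟨hpos, h⟩

open Polynomial in
/-- The roots are simple, and the cofactor left after dividing them out is monic without real
roots, hence positive; so the sign is governed by the parity of the number of larger roots. -/
theorem dirichletPoly_eval_neg_iff (V : ℤ → ℝ) {n : ℕ} (hn : 1 ≤ n) {E : ℝ}
    (hE : (dirichletPoly V n).eval E ≠ 0) :
    (dirichletPoly V n).eval E < 0 ↔ Odd (rootsAbove V n E).card := by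
  have hm := dirichletPoly_monic V hn
  obtain ⟨q, hq, -, hq0⟩ := exists_prod_multiset_X_sub_C_mul (dirichletPoly V n)
  have hqm : q.Monic :=
    (monic_multisetProd_X_sub_C _).of_mul_monic_left (by rw [hq]; exact hm)
  have hqE : 0 < q.eval E := by
    by_contra! h
    obtain ⟨z, -, hz⟩ := exists_root_of_monic_of_eval_nonpos hqm h
    have : z ∈ q.roots := (mem_roots hqm.ne_zero).2 hz
    rw [hq0] at this
    simp at this
  have hprod : (dirichletPoly V n).eval E
      = (∏ x ∈ (dirichletPoly V n).roots.toFinset, (E - x)) * q.eval E := by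
    conv_lhs => rw [← hq]
    rw [eval_mul, eval_multiset_prod, Multiset.map_map, Finset.prod,
      Multiset.toFinset_val, (dirichletPoly_nodup_roots V hn).dedup]
    simp
  have hnot : E ∉ (dirichletPoly V n).roots.toFinset := by
    rw [Multiset.mem_toFinset, mem_roots hm.ne_zero]; exact hE
  rw [hprod, ← not_le, mul_nonneg_iff_of_pos_right hqE, not_le]
  exact (prod_sub_neg_iff _ E hnot).2

/-! ### Eigenvalues as roots -/

/-- With the Dirichlet conditions `w 0 = 0` and `w (N + 1) = 0`, the boundary rows of the matrix
obey the same three-term formula as the others. -/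
theorem dirichletMatrix_mulVec (V : ℤ → ℝ) {N : ℕ} (w : ℕ → ℝ) (h0 : w 0 = 0)
    (hN : w (N + 1) = 0) (i : Fin N) :
    (dirichletMatrix V N).mulVec (fun j => w (j + 1)) i
      = w i + V (((i : ℕ) + 1 : ℕ) : ℤ) * w (i + 1) + w (i + 2) := by
  obtain ⟨i, hi⟩ := i
  have hsum : (dirichletMatrix V N).mulVec (fun j => w (j + 1)) ⟨i, hi⟩
      = ∑ j ∈ Finset.range N, ((if j + 1 = i then w (j + 1) else 0)
        + (if j = i then V ((i + 1 : ℕ) : ℤ) * w (j + 1) else 0)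
        + (if j = i + 1 then w (j + 1) else 0)) := by
    rw [Finset.sum_range, Matrix.mulVec, dotProduct]
    refine Finset.sum_congr rfl fun j _ => ?_
    simp only [dirichletMatrix, Matrix.of_apply]
    rcases lt_trichotomy i (j : ℕ) with h | h | h
    · have e1 : ¬ (i = (j : ℕ)) := by omega
      have e2 : ¬ ((j : ℕ) + 1 = i) := by omega
      have e3 : ¬ ((j : ℕ) = i) := by omega
      by_cases h' : i + 1 = (j : ℕ)
      · have e4 : ¬ (i + 1 + 1 = i) := by omega
        simp [h'.symm, e4]
      · simp [e1, e2, e3, h', Ne.symm h']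
    · simp [← h]
    · have e1 : ¬ (i = (j : ℕ)) := by omega
      have e2 : ¬ (i + 1 = (j : ℕ)) := by omega
      have e3 : ¬ ((j : ℕ) = i) := by omega
      have e4 : ¬ ((j : ℕ) = i + 1) := by omega
      simp [e1, e2, e3, e4]
  rw [hsum, Finset.sum_add_distrib, Finset.sum_add_distrib, Finset.sum_ite_eq', Finset.sum_ite_eq',
    if_pos (Finset.mem_range.2 hi)]
  congr 1
  · congr 1
    cases i with
    | zero => simp [h0]
    | succ k =>
      simp only [Nat.add_right_cancel_iff]
      rw [Finset.sum_ite_eq', if_pos (Finset.mem_range.2 (by omega))]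
  · split_ifs with h
    · rfl
    · have : i + 2 = N + 1 := by rw [Finset.mem_range] at h; omega
      simp only [this, hN]

/-- An eigenvector, extended by zero to the sites `0` and `N + 1`, is a multiple of `u_z`. -/
theorem isEigenvalueOf_iff (V : ℤ → ℝ) {N : ℕ} (hN : 1 ≤ N) (z : ℝ) :
    IsEigenvalueOf (dirichletMatrix V N) z ↔ (dirichletPoly V (N + 1)).eval z = 0 := by
  constructor
  · rintro ⟨v, hv, hMv⟩
    let w : ℕ → ℝ := fun n => if h : 1 ≤ n ∧ n ≤ N then v ⟨n - 1, by omega⟩ else 0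
    have hw0 : w 0 = 0 := by simp [w]
    have hwN : w (N + 1) = 0 := by simp [w]
    have hvw : v = fun j : Fin N => w (j + 1) := by
      funext j
      have : 1 ≤ (j : ℕ) + 1 ∧ (j : ℕ) + 1 ≤ N := ⟨by omega, j.2⟩
      simp only [w, dif_pos this, Nat.add_sub_cancel]
    have hrec : ∀ n < N, w (n + 2) = (z - V ((n + 1 : ℕ) : ℤ)) * w (n + 1) - w n := by
      intro n hn
      have h := congrFun hMv ⟨n, hn⟩
      rw [hvw, dirichletMatrix_mulVec V w hw0 hwN] at h
      simp only [Pi.smul_apply, smul_eq_mul] at h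
      linarith
    have hall : ∀ n, n ≤ N + 1 → w n = w 1 * (dirichletPoly V n).eval z := by
      intro n
      induction n using Nat.twoStepInduction with
      | zero => simp [dirichletPoly, hw0]
      | one => simp [dirichletPoly]
      | more n ih0 ih1 =>
        intro hn
        rw [hrec n (by omega), ih0 (by omega), ih1 (by omega), dirichletPoly_succ_succ_eval]
        ring
    have hw1 : w 1 ≠ 0 := by
      intro h
      apply hv
      rw [hvw]
      funext j
      rw [hall _ (by omega), h, zero_mul]
      rfl
    have := hall (N + 1) le_rfl
    rw [hwN] at this
    exact (mul_eq_zero.1 this.symm).resolve_left hw1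
  · intro hz
    refine ⟨fun j => (dirichletPoly V (j + 1)).eval z, ?_, ?_⟩
    · intro h
      have := congrFun h ⟨0, hN⟩
      simp [dirichletPoly] at this
    · funext i
      rw [dirichletMatrix_mulVec V (fun n => (dirichletPoly V n).eval z)
        (by simp [dirichletPoly]) hz]
      simp only [Pi.smul_apply, smul_eq_mul]
      rw [dirichletPoly_succ_succ_eval]
      ring

/-! ### Counting sign flips -/

theorem sgn_ne_iff (x y : ℝ) : sgn x ≠ sgn y ↔ ¬ (x < 0 ↔ y < 0) := by
  unfold sgn
  by_cases hx : x < 0 <;> by_cases hy : y < 0 <;> simp [hx, hy] <;> norm_num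

open Classical in
/-- The number of indices `1 ≤ j ≤ m` at which `u_E` flips sign between `j` and `j + 1`. -/
noncomputable def flipCount (V : ℤ → ℝ) (E : ℝ) (m : ℕ) : ℕ :=
  ((Finset.Icc 1 m).filter fun j =>
    sgn ((dirichletPoly V j).eval E) ≠ sgn ((dirichletPoly V (j + 1)).eval E)).card

open Classical in
theorem flipCount_succ (V : ℤ → ℝ) (E : ℝ) (m : ℕ) :
    flipCount V E (m + 1) = flipCount V E m +
      if ((dirichletPoly V (m + 1)).eval E < 0 ↔ (dirichletPoly V (m + 2)).eval E < 0)
        then 0 else 1 := by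
  unfold flipCount
  rw [← Finset.insert_Icc_right_eq_Icc_add_one (by omega), Finset.filter_insert]
  simp only [sgn_ne_iff]
  split_ifs with h
  · rfl
  · rw [Finset.card_insert_of_notMem (by simp)]

theorem dirichletPoly_eval_succ_ne_zero (V : ℤ → ℝ) {n : ℕ} (hn : 1 ≤ n) {E : ℝ}
    (h : (dirichletPoly V n).eval E = 0) : (dirichletPoly V (n + 1)).eval E ≠ 0 := by
  intro h'
  have := dirichletPoly_wronskian_pos V hn E
  rw [h, h'] at this
  simp at this

/-- Interlacing bounds the increment of the root count by `0` and `1`, and the sign of the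
polynomial fixes its parity. A zero of `u_E` at the previous site is skipped over: the two
neighbouring values are then opposite, and the two-step increment is `1`. -/
theorem rootsAbove_card_eq_flipCount (V : ℤ → ℝ) (E : ℝ) (n : ℕ)
    (hE : (dirichletPoly V (n + 1)).eval E ≠ 0) :
    (rootsAbove V (n + 1) E).card = flipCount V E n := by
  induction n using Nat.twoStepInduction with
  | zero => simp [rootsAbove, flipCount, dirichletPoly]
  | one =>
    have h1 := rootsAbove_card_succ_le V (n := 1) le_rfl E
    have h2 := dirichletPoly_eval_neg_iff V (n := 2) (by omega) hE
    have h3 : (rootsAbove V 1 E).card = 0 := by simp [rootsAbove, dirichletPoly]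
    have h4 : ¬ (dirichletPoly V 1).eval E < 0 := by simp [dirichletPoly]
    have h5 : flipCount V E 0 = 0 := by simp [flipCount]
    have h6 := flipCount_succ V E 0
    simp only [zero_add, Nat.reduceAdd, h4, false_iff, h5] at h6 h1 h2 ⊢
    rw [h6]
    rw [Nat.odd_iff] at h2
    split_ifs <;> grind
  | more n ih0 ih1 =>
    have a1 := rootsAbove_card_succ_le V (n := n + 1) (by omega) E
    have a2 := rootsAbove_card_succ_le V (n := n + 2) (by omega) E
    have b1 := rootsAbove_card_le_succ V (n := n + 1) (by omega) E
    have b2 := rootsAbove_card_le_succ V (n := n + 2) (by omega) E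
    have s3 := dirichletPoly_eval_neg_iff V (n := n + 3) (by omega) hE
    have f1 := flipCount_succ V E n
    have f2 := flipCount_succ V E (n + 1)
    rw [Nat.odd_iff] at s3
    simp only [add_assoc, Nat.reduceAdd] at *
    by_cases hz : (dirichletPoly V (n + 2)).eval E = 0
    · have hrec := dirichletPoly_succ_succ_eval V (n + 1) E
      simp only [add_assoc, Nat.reduceAdd, hz, mul_zero, zero_sub] at hrec
      have hne : (dirichletPoly V (n + 1)).eval E ≠ 0 := by
        intro h; rw [h] at hrec; simp [hrec] at hE
      have c1 := ih0 hne
      have s1 := dirichletPoly_eval_neg_iff V (n := n + 1) (by omega) hne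
      rw [Nat.odd_iff] at s1
      have n2 : ¬ (dirichletPoly V (n + 2)).eval E < 0 := by rw [hz]; exact lt_irrefl _
      have sw : (dirichletPoly V (n + 3)).eval E < 0 ↔ ¬ (dirichletPoly V (n + 1)).eval E < 0 := by
        rw [hrec, neg_lt_zero, not_lt]
        exact ⟨le_of_lt, fun h => lt_of_le_of_ne h hne.symm⟩
      split_ifs at f1 f2 <;> grind
    · have c2 := ih1 hz
      have s2 := dirichletPoly_eval_neg_iff V (n := n + 2) (by omega) hz
      rw [Nat.odd_iff] at s2
      split_ifs at f2 <;> grind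

/-- Oscillation Theorem: the number of eigenvalues of `H_N` strictly greater than `E`
equals the number of sign flips `F_N(E)` of the Dirichlet solution `u_E`, counted over
`1 ≤ j ≤ N` if `E` is not an eigenvalue of `H_N`, and over `1 ≤ j ≤ N-1` if it is. -/
theorem stmt2 (V : ℤ → ℝ) (E : ℝ) (u : ℤ → ℝ)
    (hu : ∀ m : ℤ, u (m - 1) + u (m + 1) + V m * u m = E * u m)
    (h0 : u 0 = 0) (h1 : u 1 = 1) (N : ℕ) (hN : 1 ≤ N) :
    (¬ IsEigenvalueOf (dirichletMatrix V N) E →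
      {z : ℝ | IsEigenvalueOf (dirichletMatrix V N) z ∧ E < z}.ncard
        = {j : ℕ | 1 ≤ j ∧ j ≤ N ∧ sgn (u (j : ℤ)) ≠ sgn (u ((j : ℤ) + 1))}.ncard) ∧
    (IsEigenvalueOf (dirichletMatrix V N) E →
      {z : ℝ | IsEigenvalueOf (dirichletMatrix V N) z ∧ E < z}.ncard
        = {j : ℕ | 1 ≤ j ∧ j ≤ N - 1 ∧ sgn (u (j : ℤ)) ≠ sgn (u ((j : ℤ) + 1))}.ncard) := by
  classical
  have hflip : ∀ m : ℕ,
      {j : ℕ | 1 ≤ j ∧ j ≤ m ∧ sgn (u (j : ℤ)) ≠ sgn (u ((j : ℤ) + 1))}.ncard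
        = flipCount V E m := by
    intro m
    rw [flipCount, ← Set.ncard_coe_finset]
    congr 1
    ext j
    simp only [Set.mem_ofPred_eq, Finset.coe_filter, Finset.mem_Icc,
      dirichletPoly_eval V E u hu h0 h1, Nat.cast_add, Nat.cast_one, and_assoc]
  have hroots : {z : ℝ | IsEigenvalueOf (dirichletMatrix V N) z ∧ E < z}.ncard
      = (rootsAbove V (N + 1) E).card := by
    rw [← Set.ncard_coe_finset]
    congr 1
    ext z
    rw [Set.mem_ofPred_eq, Finset.mem_coe, mem_rootsAbove V (by omega), isEigenvalueOf_iff V hN]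
  rw [hflip, hflip, hroots, isEigenvalueOf_iff V hN]
  -- If `u_E (N + 1) = 0` then `u_E N ≠ 0`, and `E` has equally many roots above it at both sites.
  refine ⟨fun hE => rootsAbove_card_eq_flipCount V E N hE, fun hE => ?_⟩
  have hne : (dirichletPoly V N).eval E ≠ 0 :=
    fun h => dirichletPoly_eval_succ_ne_zero V hN h hE
  obtain ⟨k, rfl⟩ := Nat.exists_eq_add_of_le' hN
  rw [Nat.add_sub_cancel, ← rootsAbove_card_eq_flipCount V E k hne]
  exact le_antisymm (rootsAbove_card_succ_le_of_root V hN hE) (rootsAbove_card_le_succ V hN E)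
end

section
/- For every compact metric space X, the set C^♯(X, 𝕋) of homotopy classes of continuous maps X → 𝕋 is countable; that is, the quotient of the space of continuous maps X → 𝕋 by the equivalence relation of homotopy is a countable set. -/
/-!
Two continuous maps into the circle `ℝ/ℤ` that are uniformly at distance less than `1/2` are
homotopic: their difference avoids the antipode `1/2` of `0`, so it lifts continuously to
`[-1/2, 1/2) ⊆ ℝ`, and the lift can be scaled linearly to `0`. For `X` compact metrizable,
`C(X, ℝ/ℤ)` with the uniform metric is separable, so a countable dense set meets every
homotopy class.
-/

/-- The setoid on `C(X, Y)` given by the homotopy relation. -/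
def homotopySetoid (X Y : Type*) [TopologicalSpace X] [TopologicalSpace Y] :
    Setoid C(X, Y) :=
  ⟨ContinuousMap.Homotopic, ContinuousMap.Homotopic.equivalence⟩

/-- A continuous map to the circle that misses the antipode of `0` lifts to `ℝ`, via the inverse
of the projection `[-1/2, 1/2) → ℝ/ℤ`, which is continuous away from that antipode. -/
lemma exists_lift_of_ne {X : Type*} [TopologicalSpace X] (h : C(X, AddCircle (1 : ℝ)))
    (hh : ∀ x, h x ≠ ((-(1 / 2) : ℝ) : AddCircle (1 : ℝ))) :
    ∃ l : C(X, ℝ), ∀ x, (l x : AddCircle (1 : ℝ)) = h x := by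
  refine ⟨⟨fun x => (AddCircle.equivIco (1 : ℝ) (-(1 / 2)) (h x) : ℝ), ?_⟩, fun x => ?_⟩
  · rw [continuous_iff_continuousAt]
    intro x
    exact continuous_subtype_val.continuousAt.comp
      (ContinuousAt.comp (AddCircle.continuousAt_equivIco (1 : ℝ) (-(1 / 2)) (hh x))
        h.continuous.continuousAt)
  · exact AddCircle.coe_equivIco (p := (1 : ℝ)) (a := -(1 / 2))

lemma homotopic_of_dist_lt {X : Type*} [TopologicalSpace X]
    (f g : C(X, AddCircle (1 : ℝ))) (hfg : ∀ x, dist (g x) (f x) < 1 / 2) :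
    f.Homotopic g := by
  obtain ⟨l, hl⟩ := exists_lift_of_ne (g - f) (fun x hx => by
    have h1 := hfg x
    rw [ContinuousMap.sub_apply] at hx
    rw [dist_eq_norm, hx, AddCircle.coe_neg, norm_neg,
      AddCircle.norm_half_period_eq (1 : ℝ)] at h1
    simp at h1)
  refine ⟨⟨⟨fun p => f p.2 + (((p.1 : ℝ) * l p.2 : ℝ) : AddCircle (1 : ℝ)), ?_⟩, ?_, ?_⟩⟩
  · exact (by fun_prop : Continuous fun p : unitInterval × X => f p.2).add
      ((AddCircle.continuous_mk' (1 : ℝ)).comp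
        (by fun_prop : Continuous fun p : unitInterval × X => (p.1 : ℝ) * l p.2))
  · intro x
    simp
  · intro x
    simp [hl]

/-- For every compact metric space `X`, the set `C^♯(X, 𝕋)` of homotopy classes of
continuous maps `X → 𝕋 = ℝ/ℤ` is countable. -/
theorem stmt8 (X : Type) [MetricSpace X] [CompactSpace X] :
    Countable (Quotient (homotopySetoid X (AddCircle (1 : ℝ)))) := by
  obtain ⟨D, hDc, hDd⟩ := TopologicalSpace.exists_countable_dense C(X, AddCircle (1 : ℝ))
  have := hDc.to_subtype
  refine Function.Surjective.countable
    (f := fun d : D => Quotient.mk (homotopySetoid X (AddCircle (1 : ℝ))) d.1) ?_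
  intro q
  induction q using Quotient.inductionOn with
  | h f =>
    obtain ⟨d, hd, hfd⟩ := hDd.exists_dist_lt f (by norm_num : (0 : ℝ) < 1 / 2)
    exact ⟨⟨d, hd⟩, Quotient.sound (homotopic_of_dist_lt d f
      fun x => (ContinuousMap.dist_apply_le_dist x).trans_lt hfd)⟩
end

section
/- Schwartzman rotation number (existence and almost-sure constancy): for every continuous map φ : X → 𝕋 there exists a real number ρ (denoted 𝔄_μ(φ)) such that for μ-almost every x ∈ X the following holds: there exists a continuous map F : ℝ → ℝ with π(F(t)) = φ(T^t x) for all t ∈ ℝ, and for every such continuous lift F one has lim_{t→∞} F(t)/t = ρ. -/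
/-!
Fix a step `δ > 0` so small that `φ (T u x)` stays within `1/4` of `φ x` for all `x` and all
`u ∈ [0, δ]` (compactness of `X`). Along any continuous lift `F` of `t ↦ φ (T t x)` the increment
`F (t + δ) - F t` is then the small real representative of `φ (T δ y) - φ y` with `y = T t x`, so
`F (n δ) - F 0` is the Birkhoff sum of the bounded measurable function `stepDisplacement`
for the map `T δ`, and `F` moves by at most `1/4` between consecutive multiples of `δ`.

It remains to show that these Birkhoff averages converge almost everywhere to the integral `I` of
the step displacement. The map `T δ` itself need not be ergodic, so ergodicity of the flow has to
be used. For `f` with negative integral, let `B` be the set of points at which the Birkhoff sums of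
`f` are unbounded above. If shifting the base point along the flow changes the sums only by a
bounded amount, as it does here, then `B` is strictly invariant under the flow. If `B` had full
measure, almost every point would have a positive Birkhoff sum, and the maximal ergodic inequality
(`integral_nonneg_of_ae_exists_birkhoffSum_pos`) would make the integral of `f` nonnegative. So `B`
is null (`ae_bddAbove_birkhoffSum`). Taking `f = ± (g - I) - ε`, where `g` is the step displacement,
bounds the Birkhoff sums by `n I ± (n ε + O(1))`, and the rotation number is `I / δ`.
-/

open MeasureTheory Filter

/-! ### Birkhoff sums with negative mean -/

/-- The maximal function `max_{k ≤ n} S_k f` of the Birkhoff sums of `f`, given by the recursion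
`M_{n+1} = max (0, f + M_n ∘ T)`. -/
noncomputable def birkhoffMax {X : Type*} (T : X → X) (f : X → ℝ) : ℕ → X → ℝ
  | 0 => fun _ => 0
  | n + 1 => fun x => max 0 (f x + birkhoffMax T f n (T x))

lemma birkhoffMax_nonneg {X : Type*} (T : X → X) (f : X → ℝ) (n : ℕ) (x : X) :
    0 ≤ birkhoffMax T f n x := by
  cases n with
  | zero => exact le_rfl
  | succ n => exact le_max_left _ _

lemma birkhoffMax_le_succ {X : Type*} (T : X → X) (f : X → ℝ) (n : ℕ) (x : X) :
    birkhoffMax T f n x ≤ birkhoffMax T f (n + 1) x := by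
  induction n generalizing x with
  | zero => exact birkhoffMax_nonneg _ _ _ _
  | succ n ih =>
    have := ih (T x)
    exact max_le_max le_rfl (by linarith)

lemma birkhoffMax_mono {X : Type*} (T : X → X) (f : X → ℝ) (x : X) :
    Monotone fun n => birkhoffMax T f n x :=
  monotone_nat_of_le_succ fun n => birkhoffMax_le_succ T f n x

lemma birkhoffSum_le_birkhoffMax {X : Type*} (T : X → X) (f : X → ℝ) (n : ℕ) (x : X) :
    birkhoffSum T f n x ≤ birkhoffMax T f n x := by
  induction n generalizing x with
  | zero => simp [birkhoffMax]
  | succ n ih =>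
    rw [birkhoffSum_succ']
    have := ih (T x)
    exact le_trans (by linarith) (le_max_right _ _)

lemma measurable_birkhoffMax {X : Type*} [MeasurableSpace X] {T : X → X} {f : X → ℝ}
    (hT : Measurable T) (hf : Measurable f) (n : ℕ) : Measurable (birkhoffMax T f n) := by
  induction n with
  | zero => exact measurable_const
  | succ n ih => exact measurable_const.max (hf.add (ih.comp hT))

lemma integrable_birkhoffMax {X : Type*} [MeasurableSpace X] {μ : Measure X} {T : X → X}
    {f : X → ℝ} (hT : MeasurePreserving T μ μ) (hf : Integrable f μ) (n : ℕ) :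
    Integrable (birkhoffMax T f n) μ := by
  induction n with
  | zero => exact integrable_zero _ _ _
  | succ n ih =>
    exact (integrable_zero _ _ _).sup (hf.add (hT.integrable_comp_of_integrable ih))

/-- A consequence of the maximal ergodic theorem, proved by Garsia's argument: on `{M_n > 0}` one
has `M_n ≤ f + M_n ∘ T`, so `f` has nonnegative integral over `{M_n > 0}`, and these sets exhaust
the space. -/
lemma integral_nonneg_of_ae_exists_birkhoffSum_pos {X : Type*} [MeasurableSpace X]
    {μ : Measure X} {T : X → X} {f : X → ℝ} (hT : MeasurePreserving T μ μ)
    (hfm : Measurable f) (hf : Integrable f μ)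
    (hpos : ∀ᵐ x ∂μ, ∃ n, 0 < birkhoffSum T f n x) : 0 ≤ ∫ x, f x ∂μ := by
  set E : ℕ → Set X := fun n => {x | 0 < birkhoffMax T f n x} with hE
  have hEm : ∀ n, MeasurableSet (E n) := fun n =>
    measurableSet_lt measurable_const (measurable_birkhoffMax hT.measurable hfm n)
  have hstep : ∀ n, 0 ≤ ∫ x, (E n).indicator f x ∂μ := by
    intro n
    have hM := integrable_birkhoffMax hT hf n
    have hMT : Integrable (fun x => birkhoffMax T f n (T x)) μ :=
      hT.integrable_comp_of_integrable hM
    have hMTeq : ∫ x, birkhoffMax T f n (T x) ∂μ = ∫ x, birkhoffMax T f n x ∂μ := by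
      conv_rhs => rw [← hT.map_eq]
      rw [integral_map hT.measurable.aemeasurable
        (measurable_birkhoffMax hT.measurable hfm n).aestronglyMeasurable]
    have h0 : ∫ x, (birkhoffMax T f n x - birkhoffMax T f n (T x)) ∂μ = 0 := by
      rw [integral_sub hM hMT, hMTeq, sub_self]
    rw [← h0]
    refine integral_mono (hM.sub hMT) (hf.indicator (hEm n)) fun x => ?_
    by_cases hx : x ∈ E n
    · have h1 := birkhoffMax_le_succ T f n x
      have h2 : 0 < birkhoffMax T f n x := hx
      rw [Set.indicator_of_mem hx]
      rcases le_max_iff.1 h1 with h | h <;> simp only <;> linarith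
    · have h1 : birkhoffMax T f n x ≤ 0 := not_lt.1 hx
      have h2 := birkhoffMax_nonneg T f n (T x)
      rw [Set.indicator_of_notMem hx]
      simp only
      linarith
  have hlim : Tendsto (fun n => ∫ x, (E n).indicator f x ∂μ) atTop (nhds (∫ x, f x ∂μ)) := by
    refine tendsto_integral_of_dominated_convergence (fun x => ‖f x‖)
      (fun n => (hfm.indicator (hEm n)).aestronglyMeasurable) hf.norm
      (fun n => Eventually.of_forall fun x => norm_indicator_le_norm_self f x) ?_
    filter_upwards [hpos] with x ⟨n, hn⟩
    refine tendsto_const_nhds.congr' ?_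
    filter_upwards [eventually_ge_atTop n] with m hm
    have : x ∈ E m :=
      (hn.trans_le (birkhoffSum_le_birkhoffMax T f n x)).trans_le (birkhoffMax_mono T f x hm)
    rw [Set.indicator_of_mem this]
  exact ge_of_tendsto' hlim hstep

lemma measurable_birkhoffSum {X : Type*} [MeasurableSpace X] {T : X → X} {f : X → ℝ}
    (hT : Measurable T) (hf : Measurable f) (n : ℕ) : Measurable (birkhoffSum T f n) := by
  unfold birkhoffSum
  exact Finset.measurable_sum _ fun i _ => hf.comp (hT.iterate i)

/-- If moving the base point along an ergodic family of maps changes the Birkhoff sums of `f` by a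
bounded amount only, and `f` has negative mean, then almost everywhere the Birkhoff sums are bounded
above: the set where they are not is strictly invariant, and cannot have full measure by the
maximal ergodic inequality. -/
lemma ae_bddAbove_birkhoffSum {X : Type*} [MeasurableSpace X] {μ : Measure X}
    [IsProbabilityMeasure μ] {T : ℝ → X → X}
    (herg : ∀ B : Set X, MeasurableSet B → (∀ t : ℝ, T t ⁻¹' B = B) → μ B = 0 ∨ μ B = 1)
    {S : X → X} (hS : MeasurePreserving S μ μ) {f : X → ℝ} (hfm : Measurable f)
    (hf : Integrable f μ) (hneg : ∫ x, f x ∂μ < 0)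
    (hshift : ∀ s x, ∃ C : ℝ, ∀ n, |birkhoffSum S f n (T s x) - birkhoffSum S f n x| ≤ C) :
    ∀ᵐ x ∂μ, ∃ K : ℝ, ∀ n, birkhoffSum S f n x ≤ K := by
  set A : Set X := {x | ∃ K : ℝ, ∀ n, birkhoffSum S f n x ≤ K} with hA
  have hAeq : A = ⋃ K : ℕ, ⋂ n : ℕ, {x | birkhoffSum S f n x ≤ K} := by
    ext x
    simp only [hA, Set.mem_ofPred_eq, Set.mem_iUnion, Set.mem_iInter]
    constructor
    · rintro ⟨K, hK⟩
      obtain ⟨k, hk⟩ := exists_nat_ge K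
      exact ⟨k, fun n => (hK n).trans hk⟩
    · rintro ⟨K, hK⟩
      exact ⟨K, hK⟩
  have hAm : MeasurableSet A := by
    rw [hAeq]
    exact MeasurableSet.iUnion fun K => MeasurableSet.iInter fun n =>
      measurableSet_le (measurable_birkhoffSum hS.measurable hfm n) measurable_const
  have hinv : ∀ t : ℝ, T t ⁻¹' Aᶜ = Aᶜ := by
    intro t
    rw [Set.preimage_compl, compl_inj_iff]
    ext x
    obtain ⟨C, hC⟩ := hshift t x
    constructor
    · rintro ⟨K, hK⟩
      refine ⟨K + C, fun n => ?_⟩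
      have h1 := abs_le.1 (hC n)
      have h2 := hK n
      linarith [h1.1]
    · rintro ⟨K, hK⟩
      refine ⟨K + C, fun n => ?_⟩
      have h1 := abs_le.1 (hC n)
      have h2 := hK n
      linarith [h1.2]
  rcases herg Aᶜ hAm.compl hinv with h | h
  · exact h
  · exfalso
    have hae : ∀ᵐ x ∂μ, x ∈ Aᶜ := (prob_compl_eq_zero_iff hAm.compl).2 h
    have := integral_nonneg_of_ae_exists_birkhoffSum_pos hS hfm hf (by
      filter_upwards [hae] with x hx
      by_contra hcon
      push Not at hcon
      exact hx ⟨0, hcon⟩)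
    linarith

/-- Birkhoff's theorem for an ergodic family of maps, with the conclusion
`S_n g = n ∫ g + o(n)` spelled out. -/
lemma ae_abs_birkhoffSum_sub_le {X : Type*} [MeasurableSpace X] {μ : Measure X}
    [IsProbabilityMeasure μ] {T : ℝ → X → X}
    (herg : ∀ B : Set X, MeasurableSet B → (∀ t : ℝ, T t ⁻¹' B = B) → μ B = 0 ∨ μ B = 1)
    {S : X → X} (hS : MeasurePreserving S μ μ) {g : X → ℝ} (hgm : Measurable g)
    (hg : Integrable g μ)
    (hshift : ∀ s x, ∃ C : ℝ, ∀ n, |birkhoffSum S g n (T s x) - birkhoffSum S g n x| ≤ C) :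
    ∀ᵐ x ∂μ, ∀ ε : ℝ, 0 < ε → ∃ K : ℝ, ∀ n : ℕ,
      |birkhoffSum S g n x - n * ∫ y, g y ∂μ| ≤ K + n * ε := by
  set I := ∫ y, g y ∂μ with hI
  have hup : ∀ ε : ℝ, ∀ n x, birkhoffSum S (fun y => g y - (I + ε)) n x
      = birkhoffSum S g n x - n * (I + ε) := by
    intro ε n x
    simp [birkhoffSum, Finset.sum_sub_distrib]
    ring
  have hlow : ∀ ε : ℝ, ∀ n x, birkhoffSum S (fun y => (I - ε) - g y) n x
      = n * (I - ε) - birkhoffSum S g n x := by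
    intro ε n x
    simp [birkhoffSum, Finset.sum_sub_distrib]
    ring
  have hm : ∀ m : ℕ, ∀ᵐ x ∂μ, ∃ K : ℝ, ∀ n : ℕ,
      |birkhoffSum S g n x - n * I| ≤ K + n * (1 / ((m : ℝ) + 1)) := by
    intro m
    set ε : ℝ := 1 / ((m : ℝ) + 1) with hε
    have hεpos : 0 < ε := by positivity
    have h1 := ae_bddAbove_birkhoffSum (f := fun y => g y - (I + ε)) herg hS
      (hgm.sub measurable_const) (hg.sub (integrable_const _))
      (by rw [integral_sub hg (integrable_const _)]; simp; linarith)
      (by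
        intro s x
        obtain ⟨C, hC⟩ := hshift s x
        refine ⟨C, fun n => ?_⟩
        rw [hup, hup]
        simpa using hC n)
    have h2 := ae_bddAbove_birkhoffSum (f := fun y => (I - ε) - g y) herg hS
      (measurable_const.sub hgm) ((integrable_const _).sub hg)
      (by rw [integral_sub (integrable_const _) hg]; simp; linarith)
      (by
        intro s x
        obtain ⟨C, hC⟩ := hshift s x
        refine ⟨C, fun n => ?_⟩
        rw [hlow, hlow, sub_sub_sub_cancel_left, abs_sub_comm]
        exact hC n)
    filter_upwards [h1, h2] with x ⟨K, hK⟩ ⟨L, hL⟩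
    refine ⟨max K L, fun n => ?_⟩
    have h3 := hK n
    have h4 := hL n
    rw [hup] at h3
    rw [hlow] at h4
    rw [abs_le]
    constructor
    · linarith [le_max_right K L]
    · linarith [le_max_left K L]
  filter_upwards [ae_all_iff.2 hm] with x hx ε hε
  obtain ⟨m, hmε⟩ := exists_nat_one_div_lt hε
  obtain ⟨K, hK⟩ := hx m
  refine ⟨K, fun n => (hK n).trans ?_⟩
  gcongr

/-! ### Lifts of circle-valued functions along the flow -/

/-- Every continuous curve in the circle lifts to a continuous curve in `ℝ`. -/
lemma exists_continuous_lift {c : ℝ → AddCircle (1 : ℝ)} (hc : Continuous c) :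
    ∃ F : ℝ → ℝ, Continuous F ∧ ∀ t, ((F t : ℝ) : AddCircle (1 : ℝ)) = c t := by
  obtain ⟨e, he⟩ := QuotientAddGroup.mk_surjective (c 0)
  obtain ⟨F, ⟨-, hF⟩, -⟩ := (AddCircle.isCoveringMap_coe (1 : ℝ)).existsUnique_continuousMap_lifts
    (⟨c, hc⟩ : C(ℝ, AddCircle (1 : ℝ))) (a₀ := 0) (e₀ := e) he
  exact ⟨F, F.continuous, fun t => congrFun hF t⟩

/-- A continuous real curve starting at `0` whose image in the circle stays within `1/4` of `0`
stays within `1/4` of `0` itself. -/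
lemma abs_lt_quarter_of_norm_coe_lt {G : ℝ → ℝ} (hG : Continuous G) (hG0 : G 0 = 0) {δ : ℝ}
    (h : ∀ u ∈ Set.Icc 0 δ, ‖((G u : ℝ) : AddCircle (1 : ℝ))‖ < 1 / 4) :
    ∀ u ∈ Set.Icc 0 δ, |G u| < 1 / 4 := by
  intro u hu
  by_contra hcon
  push Not at hcon
  obtain ⟨v, hv, hv'⟩ := intermediate_value_Icc hu.1 (hG.abs.continuousOn)
    (show (1 / 4 : ℝ) ∈ Set.Icc |G 0| |G u| from ⟨by simp [hG0], hcon⟩)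
  simp only at hv'
  have h1 := h v ⟨hv.1, hv.2.trans hu.2⟩
  rw [(AddCircle.norm_coe_eq_abs_iff (1 : ℝ) one_ne_zero).2 (by rw [hv']; norm_num), hv'] at h1
  exact lt_irrefl _ h1

/-- The representative in `(-1/2, 1/2]` of a point of the circle. -/
noncomputable def circleRep (y : AddCircle (1 : ℝ)) : ℝ :=
  (AddCircle.measurableEquivIoc (1 : ℝ) (-(1 / 2)) y : ℝ)

lemma measurable_circleRep : Measurable circleRep :=
  measurable_subtype_coe.comp (AddCircle.measurableEquivIoc (1 : ℝ) (-(1 / 2))).measurable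

lemma abs_circleRep_le (y : AddCircle (1 : ℝ)) : |circleRep y| ≤ 1 / 2 := by
  have h := (AddCircle.measurableEquivIoc (1 : ℝ) (-(1 / 2)) y).2
  rw [abs_le]
  exact ⟨h.1.le, h.2.trans (by norm_num)⟩

lemma circleRep_coe {r : ℝ} (hr : |r| < 1 / 4) : circleRep (r : AddCircle (1 : ℝ)) = r := by
  have h := abs_lt.1 hr
  have hmem : r ∈ Set.Ioc (-(1 / 2) : ℝ) (-(1 / 2) + 1) := ⟨by linarith, by linarith⟩
  exact congrArg Subtype.val
    ((AddCircle.measurableEquivIoc (1 : ℝ) (-(1 / 2))).apply_symm_apply ⟨r, hmem⟩)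

/-- The displacement of `φ`, as a real number in `(-1/2, 1/2]`, under the map `S`. -/
noncomputable def stepDisplacement {X : Type*} (S : X → X) (φ : X → AddCircle (1 : ℝ)) (x : X) :
    ℝ :=
  circleRep (φ (S x) - φ x)

lemma exists_step {X : Type*} [TopologicalSpace X] [CompactSpace X] {T : ℝ → X → X}
    (hTc : Continuous fun p : X × ℝ => T p.2 p.1) (hT0 : ∀ x, T 0 x = x)
    (φ : C(X, AddCircle (1 : ℝ))) :
    ∃ δ : ℝ, 0 < δ ∧ ∀ u ∈ Set.Icc 0 δ, ∀ x, ‖φ (T u x) - φ x‖ < 1 / 4 := by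
  have hcont : Continuous fun p : ℝ × X => ‖φ (T p.1 p.2) - φ p.2‖ :=
    ((φ.continuous.comp (hTc.comp continuous_swap)).sub (φ.continuous.comp continuous_snd)).norm
  have hev : ∀ᶠ u in nhds (0 : ℝ), ∀ x ∈ (Set.univ : Set X), ‖φ (T u x) - φ x‖ < 1 / 4 := by
    refine isCompact_univ.eventually_forall_of_forall_eventually fun x _ => ?_
    refine hcont.continuousAt.eventually_lt continuousAt_const ?_
    simp [hT0]
  obtain ⟨r, hr, hball⟩ := Metric.eventually_nhds_iff.1 hev
  refine ⟨r / 2, by positivity, fun u hu x => hball ?_ x trivial⟩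
  rw [Real.dist_eq, sub_zero, abs_of_nonneg hu.1]
  linarith [hu.2]

section Lift

variable {X : Type*} {T : ℝ → X → X} {φ : X → AddCircle (1 : ℝ)} {δ : ℝ} {F : ℝ → ℝ} {x : X}

lemma abs_lift_sub_lt (hTadd : ∀ s t : ℝ, ∀ x, T (s + t) x = T s (T t x))
    (hstep : ∀ u ∈ Set.Icc 0 δ, ∀ x, ‖φ (T u x) - φ x‖ < 1 / 4)
    (hF : Continuous F) (hlift : ∀ t : ℝ, ((F t : ℝ) : AddCircle (1 : ℝ)) = φ (T t x))
    (t : ℝ) {u : ℝ} (hu : u ∈ Set.Icc 0 δ) : |F (t + u) - F t| < 1 / 4 := by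
  refine abs_lt_quarter_of_norm_coe_lt (G := fun u => F (t + u) - F t) (by fun_prop) (by simp)
    (fun v hv => ?_) u hu
  rw [AddCircle.coe_sub, hlift, hlift, add_comm, hTadd]
  exact hstep v hv _

lemma abs_lift_sub_le (hδ : 0 < δ) (hTadd : ∀ s t : ℝ, ∀ x, T (s + t) x = T s (T t x))
    (hstep : ∀ u ∈ Set.Icc 0 δ, ∀ x, ‖φ (T u x) - φ x‖ < 1 / 4)
    (hF : Continuous F) (hlift : ∀ t : ℝ, ((F t : ℝ) : AddCircle (1 : ℝ)) = φ (T t x))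
    (n : ℕ) : ∀ s ∈ Set.Icc 0 (n * δ), ∀ t, |F (t + s) - F t| ≤ n := by
  induction n with
  | zero =>
    intro s hs t
    have : s = 0 := le_antisymm (by simpa using hs.2) hs.1
    simp [this]
  | succ n ih =>
    intro s hs t
    push_cast at hs ⊢
    by_cases hsδ : s ≤ δ
    · have := abs_lift_sub_lt hTadd hstep hF hlift t ⟨hs.1, hsδ⟩
      have hn : (0 : ℝ) ≤ n := n.cast_nonneg
      linarith
    · have h1 := ih (s - δ) ⟨by linarith, by linarith [hs.2]⟩ t
      have h2 := abs_lift_sub_lt hTadd hstep hF hlift (t + (s - δ)) ⟨hδ.le, le_rfl⟩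
      have h3 := abs_sub_le (F (t + s)) (F (t + (s - δ))) (F t)
      rw [show t + (s - δ) + δ = t + s by ring] at h2
      linarith

/-- A lift moves by a bounded amount over a time interval of given length. -/
lemma exists_abs_lift_sub_le (hδ : 0 < δ) (hTadd : ∀ s t : ℝ, ∀ x, T (s + t) x = T s (T t x))
    (hstep : ∀ u ∈ Set.Icc 0 δ, ∀ x, ‖φ (T u x) - φ x‖ < 1 / 4)
    (hF : Continuous F) (hlift : ∀ t : ℝ, ((F t : ℝ) : AddCircle (1 : ℝ)) = φ (T t x))
    (s : ℝ) : ∃ C : ℝ, ∀ t, |F (t + s) - F t| ≤ C := by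
  obtain ⟨n, hn⟩ := exists_nat_ge (|s| / δ)
  rw [div_le_iff₀ hδ] at hn
  have h := abs_lift_sub_le hδ hTadd hstep hF hlift n |s| ⟨abs_nonneg s, hn⟩
  refine ⟨n, fun t => ?_⟩
  rcases le_total 0 s with hs | hs
  · simpa [abs_of_nonneg hs] using h t
  · have := h (t + s)
    rw [abs_of_nonpos hs, add_neg_cancel_right, abs_sub_comm] at this
    exact this

lemma iterate_flow (hT0 : ∀ x, T 0 x = x) (hTadd : ∀ s t : ℝ, ∀ x, T (s + t) x = T s (T t x))
    (n : ℕ) : (T δ)^[n] x = T (n * δ) x := by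
  induction n with
  | zero => simp [hT0]
  | succ n ih =>
    rw [Function.iterate_succ_apply', ih, ← hTadd]
    congr 1
    push_cast
    ring

lemma birkhoffSum_stepDisplacement (hδ : 0 < δ) (hT0 : ∀ x, T 0 x = x)
    (hTadd : ∀ s t : ℝ, ∀ x, T (s + t) x = T s (T t x))
    (hstep : ∀ u ∈ Set.Icc 0 δ, ∀ x, ‖φ (T u x) - φ x‖ < 1 / 4)
    (hF : Continuous F) (hlift : ∀ t : ℝ, ((F t : ℝ) : AddCircle (1 : ℝ)) = φ (T t x))
    (n : ℕ) : birkhoffSum (T δ) (stepDisplacement (T δ) φ) n x = F (n * δ) - F 0 := by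
  induction n with
  | zero => simp
  | succ n ih =>
    rw [birkhoffSum_succ, ih, iterate_flow hT0 hTadd, stepDisplacement, ← hTadd, ← hlift,
      add_comm δ, ← hlift, ← AddCircle.coe_sub,
      circleRep_coe (abs_lift_sub_lt hTadd hstep hF hlift _ ⟨hδ.le, le_rfl⟩)]
    push_cast
    rw [add_mul, one_mul]
    ring

end Lift

/-- If `F (n δ) - F 0 = n I + o(n)` and `F` moves by at most `1/4` over time intervals of length at
most `δ`, then `F t / t → I / δ`. -/
lemma tendsto_div_of_step {F : ℝ → ℝ} {δ I : ℝ} (hδ : 0 < δ)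
    (hmove : ∀ t, ∀ u ∈ Set.Icc 0 δ, |F (t + u) - F t| < 1 / 4)
    (hsum : ∀ ε : ℝ, 0 < ε → ∃ K : ℝ, ∀ n : ℕ, |F (n * δ) - F 0 - n * I| ≤ K + n * ε) :
    Tendsto (fun t : ℝ => F t / t) atTop (nhds (I / δ)) := by
  rw [Metric.tendsto_atTop]
  intro η hη
  obtain ⟨K, hK⟩ := hsum (δ * (η / 2)) (by positivity)
  set C : ℝ := |K| + |F 0| + |I| + 1 with hC
  have hCpos : 0 < C := by positivity
  refine ⟨2 * C / η + 1, fun t ht => ?_⟩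
  have htpos : 0 < t := lt_of_lt_of_le (by positivity) ht
  have hCt : C < t * (η / 2) := by
    have : 2 * C / η < t := by linarith
    rw [div_lt_iff₀ hη] at this
    linarith
  set n : ℕ := ⌊t / δ⌋₊ with hn
  have hn1 : (n : ℝ) ≤ t / δ := Nat.floor_le (by positivity)
  have hn2 : t / δ < n + 1 := Nat.lt_floor_add_one _
  have hn1' : n * δ ≤ t := by rwa [le_div_iff₀ hδ] at hn1
  have hn2' : t < n * δ + δ := by rw [div_lt_iff₀ hδ] at hn2; linarith
  have h1 := hmove (n * δ) (t - n * δ) ⟨by linarith, by linarith⟩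
  rw [add_sub_cancel] at h1
  have h2 := hK n
  have h3 : |n * I - t / δ * I| ≤ |I| := by
    rw [← sub_mul, abs_mul]
    refine mul_le_of_le_one_left (abs_nonneg _) ?_
    rw [abs_le]
    constructor <;> linarith
  have h4 : n * (δ * (η / 2)) ≤ t * (η / 2) := by
    rw [← mul_assoc]
    gcongr
  have h5 : |F t - t / δ * I| < t * η := by
    have e : F t - t / δ * I = (F t - F (n * δ)) + (F (n * δ) - F 0 - n * I)
        + (n * I - t / δ * I) + F 0 := by ring
    have a1 := abs_add_le ((F t - F (n * δ)) + (F (n * δ) - F 0 - n * I)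
        + (n * I - t / δ * I)) (F 0)
    have a2 := abs_add_le ((F t - F (n * δ)) + (F (n * δ) - F 0 - n * I)) (n * I - t / δ * I)
    have a3 := abs_add_le (F t - F (n * δ)) (F (n * δ) - F 0 - n * I)
    rw [e]
    linarith [le_abs_self K]
  have e : F t / t - I / δ = (F t - t / δ * I) / t := by
    field_simp
  rw [Real.dist_eq, e, abs_div, abs_of_pos htpos, div_lt_iff₀ htpos]
  linarith

/-! ### The rotation number -/

/-- Schwartzman rotation number (existence and almost-sure constancy): for every
continuous `φ : X → 𝕋` there is `ρ ∈ ℝ` such that for `μ`-a.e. `x`, continuous lifts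
`F : ℝ → ℝ` of `t ↦ φ(T^t x)` exist and every such lift satisfies `F(t)/t → ρ`. -/
theorem stmt10 (X : Type) [MetricSpace X] [CompactSpace X]
    [MeasurableSpace X] [BorelSpace X]
    (T : ℝ → X → X)
    (hTc : Continuous fun p : X × ℝ => T p.2 p.1)
    (hT0 : ∀ x, T 0 x = x)
    (hTadd : ∀ s t : ℝ, ∀ x, T (s + t) x = T s (T t x))
    (μ : Measure X) [IsProbabilityMeasure μ]
    (hinv : ∀ t : ℝ, MeasurePreserving (T t) μ μ)
    (herg : ∀ B : Set X, MeasurableSet B → (∀ t : ℝ, T t ⁻¹' B = B) →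
      μ B = 0 ∨ μ B = 1)
    (φ : C(X, AddCircle (1 : ℝ))) :
    ∃ ρ : ℝ, ∀ᵐ x ∂μ,
      (∃ F : ℝ → ℝ, Continuous F ∧
        ∀ t : ℝ, ((F t : ℝ) : AddCircle (1 : ℝ)) = φ (T t x)) ∧
      ∀ F : ℝ → ℝ, Continuous F →
        (∀ t : ℝ, ((F t : ℝ) : AddCircle (1 : ℝ)) = φ (T t x)) →
        Tendsto (fun t : ℝ => F t / t) atTop (nhds ρ) := by
  obtain ⟨δ, hδ, hstep⟩ := exists_step hTc hT0 φ
  set g : X → ℝ := stepDisplacement (T δ) φ with hg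
  have hlifts : ∀ x, ∃ F : ℝ → ℝ, Continuous F ∧
      ∀ t : ℝ, ((F t : ℝ) : AddCircle (1 : ℝ)) = φ (T t x) := fun x =>
    exists_continuous_lift (c := fun t => φ (T t x))
      (φ.continuous.comp (hTc.comp (Continuous.prodMk_right x)))
  have hgm : Measurable g :=
    measurable_circleRep.comp
      ((φ.continuous.comp (hTc.comp (Continuous.prodMk_left δ))).sub φ.continuous).measurable
  have hgi : Integrable g μ :=
    Integrable.of_bound hgm.aestronglyMeasurable (1 / 2)
      (Eventually.of_forall fun x => abs_circleRep_le _)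
  have hshift : ∀ s x, ∃ C : ℝ, ∀ n,
      |birkhoffSum (T δ) g n (T s x) - birkhoffSum (T δ) g n x| ≤ C := by
    intro s x
    obtain ⟨F, hF, hlift⟩ := hlifts x
    obtain ⟨C, hC⟩ := exists_abs_lift_sub_le hδ hTadd hstep hF hlift s
    -- The translate of a lift at `x` by `s` is a lift at `T s x`.
    have hlift' : ∀ t : ℝ, ((F (t + s) : ℝ) : AddCircle (1 : ℝ)) = φ (T t (T s x)) := by
      intro t
      rw [hlift, hTadd]
    refine ⟨C + C, fun n => ?_⟩
    rw [hg, birkhoffSum_stepDisplacement hδ hT0 hTadd hstep hF hlift,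
      birkhoffSum_stepDisplacement (F := fun t => F (t + s)) hδ hT0 hTadd hstep (by fun_prop)
        hlift']
    have h1 := abs_le.1 (hC (n * δ))
    have h2 := abs_le.1 (hC 0)
    rw [abs_le]
    constructor <;> linarith [h1.1, h1.2, h2.1, h2.2]
  refine ⟨(∫ y, g y ∂μ) / δ, ?_⟩
  filter_upwards [ae_abs_birkhoffSum_sub_le herg (hinv δ) hgm hgi hshift] with x hx
  refine ⟨hlifts x, fun F hF hlift => ?_⟩
  refine tendsto_div_of_step hδ
    (fun t u hu => abs_lift_sub_lt hTadd hstep hF hlift t hu) fun ε hε => ?_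
  obtain ⟨K, hK⟩ := hx ε hε
  refine ⟨K, fun n => ?_⟩
  rw [← birkhoffSum_stepDisplacement hδ hT0 hTadd hstep hF hlift]
  exact hK n
end

section
/- Homotopy invariance of the Schwartzman rotation number: if φ, φ' : X → 𝕋 are continuous and homotopic, and if ρ, ρ' ∈ ℝ have the property that for μ-almost every x ∈ X every continuous lift F : ℝ → ℝ of t ↦ φ(T^t x) (respectively t ↦ φ'(T^t x)) satisfies lim_{t→∞} F(t)/t = ρ (respectively ρ'), then ρ = ρ'. -/
/-!
Homotopic maps have lifts along an orbit that differ by a bounded function. If `H` is a homotopy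
from `φ` to `φ'`, then `(s, x) ↦ H(s, x) - φ(x)` starts at the constant map `0`, so by homotopy
lifting along `ℝ → 𝕋` its endpoint `φ' - φ` has a global continuous real lift `h : X → ℝ`
(`exists_lift_sub_of_homotopic`). If `F` lifts `t ↦ φ(T^t x)`, then `t ↦ F(t) + h(T^t x)` lifts
`t ↦ φ'(T^t x)`. Since `X` is compact, `h` is bounded, so `h(T^t x)/t → 0` and both lifts have the
same growth rate. One point `x` at which both almost sure properties hold, together with one lift
`F` (`exists_lift_real`), therefore gives `ρ = ρ'`.
-/

open MeasureTheory Filter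

theorem exists_lift_sub_of_homotopic {X : Type*} [TopologicalSpace X]
    {φ φ' : C(X, AddCircle (1 : ℝ))} (hhom : φ.Homotopic φ') :
    ∃ h : C(X, ℝ), ∀ x, ((h x : ℝ) : AddCircle (1 : ℝ)) = φ' x - φ x := by
  obtain ⟨H⟩ := hhom
  let D : C(unitInterval × X, AddCircle (1 : ℝ)) :=
    ⟨fun p => H p - φ p.2, by fun_prop⟩
  have cov := AddCircle.isCoveringMap_coe (1 : ℝ)
  have hD0 : ∀ x, D (0, x) = (((0 : C(X, ℝ)) x : ℝ) : AddCircle (1 : ℝ)) := by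
    intro x
    simp [D]
  refine ⟨⟨fun x => cov.liftHomotopy D 0 hD0 (1, x), by fun_prop⟩, fun x => ?_⟩
  have hx := congrFun (cov.liftHomotopy_lifts D 0 hD0) (1, x)
  have hD1 : D (1, x) = φ' x - φ x := by simp [D]
  exact hx.trans hD1

theorem exists_lift_real (γ : C(ℝ, AddCircle (1 : ℝ))) :
    ∃ F : C(ℝ, ℝ), ∀ t, ((F t : ℝ) : AddCircle (1 : ℝ)) = γ t := by
  obtain ⟨e, he⟩ := QuotientAddGroup.mk_surjective (γ 0)
  obtain ⟨F, ⟨-, hF⟩, -⟩ :=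
    (AddCircle.isCoveringMap_coe (1 : ℝ)).existsUnique_continuousMap_lifts γ (a₀ := 0) (e₀ := e) he
  exact ⟨F, fun t => congrFun hF t⟩

/-- Homotopy invariance of the Schwartzman rotation number: if `φ, φ' : X → 𝕋` are
homotopic and `ρ, ρ'` are the almost-sure limits `F(t)/t → ρ` (resp. `ρ'`) for every
continuous lift `F` of `t ↦ φ(T^t x)` (resp. `t ↦ φ'(T^t x)`), then `ρ = ρ'`. -/
theorem stmt11 (X : Type) [MetricSpace X] [CompactSpace X]
    [MeasurableSpace X] [BorelSpace X]
    (T : ℝ → X → X)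
    (hTc : Continuous fun p : X × ℝ => T p.2 p.1)
    (hT0 : ∀ x, T 0 x = x)
    (hTadd : ∀ s t : ℝ, ∀ x, T (s + t) x = T s (T t x))
    (μ : Measure X) [IsProbabilityMeasure μ]
    (hinv : ∀ t : ℝ, MeasurePreserving (T t) μ μ)
    (herg : ∀ B : Set X, MeasurableSet B → (∀ t : ℝ, T t ⁻¹' B = B) →
      μ B = 0 ∨ μ B = 1)
    (φ φ' : C(X, AddCircle (1 : ℝ)))
    (hhom : φ.Homotopic φ')
    (ρ ρ' : ℝ)
    (hρ : ∀ᵐ x ∂μ, ∀ F : ℝ → ℝ, Continuous F →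
      (∀ t : ℝ, ((F t : ℝ) : AddCircle (1 : ℝ)) = φ (T t x)) →
      Tendsto (fun t : ℝ => F t / t) atTop (nhds ρ))
    (hρ' : ∀ᵐ x ∂μ, ∀ F : ℝ → ℝ, Continuous F →
      (∀ t : ℝ, ((F t : ℝ) : AddCircle (1 : ℝ)) = φ' (T t x)) →
      Tendsto (fun t : ℝ => F t / t) atTop (nhds ρ')) :
    ρ = ρ' := by
  obtain ⟨h, hh⟩ := exists_lift_sub_of_homotopic hhom
  obtain ⟨x, hx, hx'⟩ := (hρ.and hρ').exists
  have horb : Continuous fun t : ℝ => T t x := hTc.comp (by fun_prop : Continuous fun t => (x, t))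
  obtain ⟨F, hF⟩ := exists_lift_real (φ.comp ⟨fun t : ℝ => T t x, horb⟩)
  have hlim := hx F F.continuous hF
  have hlim' := hx' (fun t => F t + h (T t x))
    (F.continuous.add (h.continuous.comp horb)) (fun t => by
      have hFt : ((F t : ℝ) : AddCircle (1 : ℝ)) = φ (T t x) := hF t
      rw [AddCircle.coe_add, hFt, hh, add_sub_cancel])
  have hzero : Tendsto (fun t : ℝ => h (T t x) / t) atTop (nhds 0) := by
    refine squeeze_zero_norm (a := fun t : ℝ => ‖h‖ / |t|) (fun t => ?_)
      (tendsto_const_nhds.div_atTop tendsto_abs_atTop_atTop)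
    rw [norm_div, Real.norm_eq_abs t]
    gcongr
    exact h.norm_coe_le_norm _
  have hsum := hlim.add hzero
  simp only [← add_div, add_zero] at hsum
  exact tendsto_nhds_unique hsum hlim'
end

section
/- Characterizations of uniform hyperbolicity for continuous SL(2,ℝ)-cocycles over flows: for a continuous SL(2,ℝ)-cocycle Φ over a continuous flow (T^t) on a compact metric space X, the following are equivalent. (a) Uniform exponential growth: there exist C > 0 and λ > 1 such that ‖Φ^t(x)‖ ≥ C·λ^{|t|} for all t ∈ ℝ and x ∈ X. (b) Invariant exponential splitting: there exist c > 0, L > 1, and continuous maps Λ^s, Λ^u : X → ℝP¹ such that Φ^t(x)·Λ^s(x) = Λ^s(T^t x) and Φ^t(x)·Λ^u(x) = Λ^u(T^t x) for all x ∈ X and t ∈ ℝ, and for all t > 0, x ∈ X, and nonzero vectors v_s ∈ Λ^s(x) and v_u ∈ Λ^u(x), one has ‖Φ^t(x) v_s‖ ≤ c·L^{−t}·‖v_s‖ and ‖Φ^{−t}(x) v_u‖ ≤ c·L^{−t}·‖v_u‖. (c) No bounded orbit: there do not exist x ∈ X and a nonzero vector v ∈ ℝ² with sup_{t∈ℝ}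 ‖Φ^t(x) v‖ < ∞. -/
/-!
The implications proved are (c) ⇒ (b) ⇒ (a) ⇒ (c).

(c) ⇒ (b). By compactness, if no nonzero orbit is bounded there is `N` such that every nonzero vector
is doubled at some time in `[-N, N]` (`exists_doubling`). Hence the norm along an orbit has no
approximate maximum at scale `N`. This gives a quasi-convexity bound (`norm_le_max`) and shows that a
forward bounded orbit halves over each time `N`, so it decays exponentially (`decay`). Because the
determinant is `1`, some unit vector at `x` is not expanded by `Φ^n(x)`; a limit of such vectors is
forward bounded (`exists_fwdBdd`). Forward bounded vectors form a subspace that meets the nonzero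
subspace of backward bounded vectors trivially, so both are lines. Continuity of these line fields
follows from the compactness of the unit circle and the uniformity of the bounds (`exists_line`).

(b) ⇒ (a). A vector of `Λᵘ` is expanded forward and a vector of `Λˢ` is expanded backward.

(a) ⇒ (c). Along an orbit whose norm stays above a constant, the cocycle in a frame adapted to the
orbit is triangular and area preserving, so it grows at most linearly as long as the orbit
itself is bounded at the end (`norm_le_linear`). Given a bounded orbit, either it stays away from `0`
on a half line, or it visits every small norm `ε` both before and after time `0`; in the second case
the time window between the last visit before and the first visit after `0` has equal norms at its
ends, larger norms inside, and a length tending to infinity as `ε → 0`. Both cases contradict uniform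
exponential growth (`noBoundedOrbit`).
-/

open Filter

noncomputable section

/-- `ℝ²` with the Euclidean norm. -/
abbrev V2 : Type := EuclideanSpace ℝ (Fin 2)

/-- The quotient topology on the real projective line `ℝP¹`. -/
instance : TopologicalSpace (Projectivization ℝ V2) := by
  unfold Projectivization; infer_instance

/-- A `2×2` real matrix viewed as a continuous linear map on Euclidean `ℝ²`. -/
noncomputable def matCLM (M : Matrix (Fin 2) (Fin 2) ℝ) : V2 →L[ℝ] V2 :=
  Matrix.toEuclideanCLM (𝕜 := ℝ) M

/-- The oriented area `v ∧ w` of the parallelogram spanned by `v` and `w`. -/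
def area (v w : V2) : ℝ := v 0 * w 1 - v 1 * w 0

/-- The cocycle in operator form: `A x t` is the action of `Φ^t(x)` on Euclidean `ℝ²`, and the
condition `det = 1` is recorded as invariance of the oriented area. -/
structure IsAreaCocycle {X : Type} [MetricSpace X] (T : ℝ → X → X) (A : X → ℝ → V2 →L[ℝ] V2) :
    Prop where
  contT : Continuous fun p : X × ℝ => T p.2 p.1
  T_zero : ∀ x, T 0 x = x
  T_add : ∀ s t x, T (s + t) x = T s (T t x)
  contA : Continuous fun p : X × ℝ => A p.1 p.2
  zero : ∀ x v, A x 0 v = v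
  add : ∀ x s t v, A x (s + t) v = A (T s x) t (A x s v)
  area_eq : ∀ x t v w, area (A x t v) (A x t w) = area v w

/-- No nonzero vector has a bounded orbit. -/
def NoBoundedOrbit {X : Type} (A : X → ℝ → V2 →L[ℝ] V2) : Prop :=
  ¬ ∃ (x : X) (v : V2), v ≠ 0 ∧ ∃ C : ℝ, ∀ t : ℝ, ‖A x t v‖ ≤ C

/-- Every nonzero vector is more than doubled at some time in `[-N, N]`. -/
def Doubling {X : Type} (A : X → ℝ → V2 →L[ℝ] V2) (N : ℝ) : Prop :=
  ∀ x v, v ≠ 0 → ∃ t, |t| ≤ N ∧ 2 * ‖v‖ < ‖A x t v‖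

/-- `M` bounds the operator norms at times in `[-N, N]`. -/
def NormBound {X : Type} (A : X → ℝ → V2 →L[ℝ] V2) (N M : ℝ) : Prop :=
  ∀ x t, |t| ≤ N → ‖A x t‖ ≤ M

/-- The forward orbit of `v` at `x` is bounded. -/
def FwdBdd {X : Type} (A : X → ℝ → V2 →L[ℝ] V2) (x : X) (v : V2) : Prop :=
  ∃ K, ∀ t, 0 ≤ t → ‖A x t v‖ ≤ K

/-! ### Linear algebra in the plane -/

lemma norm_sq_V2 (v : V2) : ‖v‖ ^ 2 = v 0 ^ 2 + v 1 ^ 2 := by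
  simp [EuclideanSpace.norm_sq_eq]

lemma inner_V2 (v w : V2) : inner ℝ v w = v 0 * w 0 + v 1 * w 1 := by
  simp [PiLp.inner_apply, mul_comm]

lemma area_sq_add_inner_sq (v w : V2) :
    area v w ^ 2 + (inner ℝ v w) ^ 2 = ‖v‖ ^ 2 * ‖w‖ ^ 2 := by
  rw [norm_sq_V2, norm_sq_V2, inner_V2, area]; ring

lemma abs_area_le (v w : V2) : |area v w| ≤ ‖v‖ * ‖w‖ := by
  apply abs_le_of_sq_le_sq _ (by positivity)
  nlinarith [area_sq_add_inner_sq v w, sq_nonneg (inner ℝ v w : ℝ)]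

lemma eq_smul_of_area_eq_zero {v w : V2} (hv : v ≠ 0) (h : area v w = 0) :
    ∃ a : ℝ, w = a • v := by
  have h0 : v 0 ^ 2 + v 1 ^ 2 ≠ 0 := by
    rw [← norm_sq_V2]; exact pow_ne_zero _ (norm_ne_zero_iff.2 hv)
  refine ⟨(v 0 * w 0 + v 1 * w 1) / (v 0 ^ 2 + v 1 ^ 2), ?_⟩
  rw [area] at h
  ext i
  fin_cases i
  · simp; field_simp; linear_combination (-v 1) * h
  · simp; field_simp; linear_combination (v 0) * h

lemma area_smul_eq (v w u : V2) : area v w • u = area u w • v + area v u • w := by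
  ext i
  fin_cases i <;> simp [area] <;> ring

/-- An area-preserving map does not expand every vector: if the quadratic form `‖Bv‖² - ‖v‖²` were
positive definite, its determinant and diagonal would be positive, which contradicts
`det (Bᵀ B) = 1`. -/
lemma exists_norm_le_of_area {B : V2 →L[ℝ] V2} (hB : ∀ v w, area (B v) (B w) = area v w) :
    ∃ v : V2, ‖v‖ = 1 ∧ ‖B v‖ ≤ 1 := by
  suffices h : ∃ v : V2, v ≠ 0 ∧ ‖B v‖ ≤ ‖v‖ by
    obtain ⟨v, hv, h⟩ := h
    have hp : 0 < ‖v‖ := norm_pos_iff.2 hv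
    refine ⟨‖v‖⁻¹ • v, ?_, ?_⟩
    · rw [norm_smul, norm_inv, norm_norm, inv_mul_cancel₀ hp.ne']
    · rw [map_smul, norm_smul, norm_inv, norm_norm, inv_mul_le_iff₀ hp]; simpa using h
  by_contra! hcon
  set e : V2 := !₂[1, 0]
  set f : V2 := !₂[0, 1]
  have hf' : ∀ x y : ℝ, x • e + y • f = !₂[x, y] := by
    intro x y; ext i; fin_cases i <;> simp [e, f]
  have key : ∀ x y : ℝ, x ≠ 0 ∨ y ≠ 0 →
      x ^ 2 + y ^ 2 < x ^ 2 * ‖B e‖ ^ 2 + 2 * x * y * inner ℝ (B e) (B f) + y ^ 2 * ‖B f‖ ^ 2 := by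
    intro x y hxy
    have hne : x • e + y • f ≠ 0 := by
      rw [hf']
      intro h
      have h0 := congrArg (fun v : V2 => v 0) h
      have h1 := congrArg (fun v : V2 => v 1) h
      simp at h0 h1
      simp [h0, h1] at hxy
    have h := hcon _ hne
    have h2 : ‖x • e + y • f‖ ^ 2 < ‖B (x • e + y • f)‖ ^ 2 := by gcongr
    have h3 : ‖x • e + y • f‖ ^ 2 = x ^ 2 + y ^ 2 := by rw [hf', norm_sq_V2]; simp
    rw [h3] at h2
    have h4 : ‖B (x • e + y • f)‖ ^ 2
        = x ^ 2 * ‖B e‖ ^ 2 + 2 * x * y * inner ℝ (B e) (B f) + y ^ 2 * ‖B f‖ ^ 2 := by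
      rw [map_add, map_smul, map_smul, norm_sq_V2, norm_sq_V2, norm_sq_V2, inner_V2]
      simp; ring
    linarith
  have h1 := area_sq_add_inner_sq (B e) (B f)
  rw [hB] at h1
  have h2 : area e f = 1 := by simp [area, e, f]
  rw [h2] at h1
  have hp := key 1 0 (by simp)
  have hq := key 0 1 (by simp)
  set p := ‖B e‖ ^ 2
  set q := ‖B f‖ ^ 2
  set r : ℝ := inner ℝ (B e) (B f)
  norm_num at hp hq
  -- the vector `(r, 1 - p)` evaluates the quadratic form to `(p - 1)` times its determinant
  have hd := key r (-(p - 1)) (Or.inr (by linarith))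
  have h5 : 0 < (p - 1) * ((p - 1) * (q - 1) - r ^ 2) := by linarith
  have h6 := pos_of_mul_pos_right h5 (by linarith)
  nlinarith

section Cocycle

variable {X : Type} [MetricSpace X] {T : ℝ → X → X} {A : X → ℝ → V2 →L[ℝ] V2}

/-! ### Basic properties of cocycles -/

/-- Time reversal of a cocycle. -/
lemma IsAreaCocycle.reverse (h : IsAreaCocycle T A) :
    IsAreaCocycle (fun t => T (-t)) (fun x t => A x (-t)) where
  contT := h.contT.comp (by fun_prop : Continuous fun p : X × ℝ => (p.1, -p.2))
  T_zero x := by simp [h.T_zero]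
  T_add s t x := by rw [neg_add, h.T_add]
  contA := h.contA.comp (by fun_prop : Continuous fun p : X × ℝ => (p.1, -p.2))
  zero x v := by simp [h.zero]
  add x s t v := by rw [neg_add, h.add]
  area_eq x t v w := h.area_eq _ _ _ _

lemma NoBoundedOrbit.reverse {X : Type} {A : X → ℝ → V2 →L[ℝ] V2}
    (h : NoBoundedOrbit A) : NoBoundedOrbit (fun x t => A x (-t)) := by
  rintro ⟨x, v, hv, C, hC⟩
  exact h ⟨x, v, hv, C, fun t => by simpa using hC (-t)⟩

lemma Doubling.reverse {X : Type} {A : X → ℝ → V2 →L[ℝ] V2}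
    {N : ℝ} (h : Doubling A N) : Doubling (fun x t => A x (-t)) N := by
  intro x v hv
  obtain ⟨t, ht, h2⟩ := h x v hv
  exact ⟨-t, by rwa [abs_neg], by simpa using h2⟩

lemma NormBound.reverse {X : Type} {A : X → ℝ → V2 →L[ℝ] V2}
    {N M : ℝ} (h : NormBound A N M) : NormBound (fun x t => A x (-t)) N M :=
  fun x t ht => h x (-t) (by rwa [abs_neg])

namespace IsAreaCocycle

lemma neg_apply (h : IsAreaCocycle T A) (x : X) (t : ℝ) (v : V2) :
    A (T t x) (-t) (A x t v) = v := by
  rw [← h.add, add_neg_cancel, h.zero]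

lemma apply_neg (h : IsAreaCocycle T A) (x : X) (t : ℝ) (v : V2) :
    A x t (A (T t x) (-t) v) = v := by
  have h1 := h.neg_apply (T t x) (-t) v
  rwa [← h.T_add, neg_add_cancel, h.T_zero, neg_neg] at h1

lemma apply_ne_zero (h : IsAreaCocycle T A) (x : X) (t : ℝ) {v : V2} (hv : v ≠ 0) :
    A x t v ≠ 0 := by
  intro h0
  have := h.neg_apply x t v
  rw [h0, map_zero] at this
  exact hv this.symm

lemma continuous_apply (h : IsAreaCocycle T A) :
    Continuous fun p : X × ℝ × V2 => A p.1 p.2.1 p.2.2 :=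
  (h.contA.comp (by fun_prop : Continuous fun p : X × ℝ × V2 => (p.1, p.2.1))).clm_apply
    (by fun_prop)

lemma continuous_norm (h : IsAreaCocycle T A) (x : X) (v : V2) :
    Continuous fun t => ‖A x t v‖ :=
  (h.continuous_apply.comp (by fun_prop : Continuous fun t : ℝ => (x, t, v))).norm

/-- Closedness of a condition `‖Φ^t(x) v‖ ≤ K` imposed for all times in a set. -/
lemma isClosed_norm_le (h : IsAreaCocycle T A) (I : Set ℝ) (K : ℝ) :
    IsClosed {p : X × Metric.sphere (0 : V2) 1 | ∀ t ∈ I, ‖A p.1 t p.2‖ ≤ K} := by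
  simp only [Set.ofPred_forall]
  refine isClosed_biInter fun t _ => isClosed_le ?_ continuous_const
  exact (h.continuous_apply.comp (by fun_prop :
    Continuous fun p : X × Metric.sphere (0 : V2) 1 => (p.1, t, (p.2 : V2)))).norm

lemma exists_normBound [CompactSpace X] (h : IsAreaCocycle T A) (N : ℝ) :
    ∃ M, 1 ≤ M ∧ NormBound A N M := by
  obtain ⟨M, hM⟩ := ((isCompact_univ (X := X)).prod
    (isCompact_Icc (a := -N) (b := N))).exists_bound_of_continuousOn h.contA.continuousOn
  refine ⟨max 1 M, le_max_left _ _, fun x t ht => ?_⟩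
  exact (hM (x, t) ⟨trivial, abs_le.1 ht⟩).trans (le_max_right _ _)

/-! ### Exponential dichotomy from the absence of bounded orbits -/

/-- If orbits of unit vectors bounded by `2` on `[-n, n]` existed for all `n`, a limit of them would
be a bounded orbit. -/
lemma exists_doubling [CompactSpace X] (h : IsAreaCocycle T A) (hb : NoBoundedOrbit A) :
    ∃ N, 0 < N ∧ Doubling A N := by
  by_contra! hcon
  have hcl := fun n : ℕ => h.isClosed_norm_le (Set.Icc (-(n + 1 : ℝ)) (n + 1)) 2
  obtain ⟨p, hp⟩ := IsCompact.nonempty_iInter_of_sequence_nonempty_isCompact_isClosed _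
    (fun n => by
      intro p hp t ht
      exact hp t ⟨by push_cast; linarith [ht.1], by push_cast; linarith [ht.2]⟩)
    (fun n => by
      have := hcon (n + 1) (by positivity)
      simp only [Doubling] at this
      push Not at this
      obtain ⟨x, v, hv, hx⟩ := this
      have hpos : 0 < ‖v‖ := norm_pos_iff.2 hv
      refine ⟨(x, ⟨‖v‖⁻¹ • v, ?_⟩), fun t ht => ?_⟩
      · simp [norm_smul, hpos.ne']
      · simp only [map_smul, norm_smul, norm_inv, norm_norm]
        rw [inv_mul_le_iff₀ hpos, mul_comm]
        exact hx t (abs_le.2 ht))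
    (hcl 0).isCompact hcl
  rw [Set.mem_iInter] at hp
  refine hb ⟨p.1, p.2, ?_, 2, fun t => ?_⟩
  · exact norm_ne_zero_iff.1 (by rw [mem_sphere_zero_iff_norm.1 p.2.2]; exact one_ne_zero)
  · obtain ⟨n, hn⟩ := exists_nat_ge |t|
    exact hp n t (abs_le.1 (by linarith))

variable {N M : ℝ}

lemma norm_le_of_near (h : IsAreaCocycle T A) (hM : NormBound A N M) (x : X) (v : V2)
    {s t : ℝ} (hst : |t - s| ≤ N) : ‖A x t v‖ ≤ M * ‖A x s v‖ := by
  have h1 : A x t v = A (T s x) (t - s) (A x s v) := by rw [← h.add]; congr 2; ring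
  rw [h1]
  exact (ContinuousLinearMap.le_opNorm _ _).trans
    (mul_le_mul_of_nonneg_right (hM _ _ hst) (norm_nonneg _))

lemma exists_double_near (h : IsAreaCocycle T A) (hD : Doubling A N) (x : X) {v : V2}
    (hv : v ≠ 0) (s : ℝ) : ∃ t, |t - s| ≤ N ∧ 2 * ‖A x s v‖ < ‖A x t v‖ := by
  obtain ⟨r, hr, h2⟩ := hD (T s x) (A x s v) (h.apply_ne_zero x s hv)
  exact ⟨s + r, by simpa using hr, by rwa [h.add]⟩

/-- A quasi-convexity property: since no time is an approximate local maximum of the norm at scale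
`N`, the norm on `[0, b]` is controlled by its values at the endpoints. -/
lemma norm_le_max (h : IsAreaCocycle T A) (hD : Doubling A N) (hM : NormBound A N M) (hM1 : 1 ≤ M)
    (x : X) {v : V2} (hv : v ≠ 0) {b t : ℝ} (ht : t ∈ Set.Icc 0 b) :
    ‖A x t v‖ ≤ M * max ‖v‖ ‖A x b v‖ := by
  obtain ⟨m, hm, hmax⟩ := isCompact_Icc.exists_isMaxOn ⟨t, ht⟩
    (h.continuous_norm x v).continuousOn
  refine (hmax ht).trans ?_
  have hM0 : 0 ≤ M := by linarith
  by_cases h1 : m < N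
  · have := h.norm_le_of_near hM x v (s := 0) (t := m)
      (by rw [sub_zero, abs_of_nonneg hm.1]; exact h1.le)
    rw [h.zero] at this
    exact this.trans (mul_le_mul_of_nonneg_left (le_max_left _ _) hM0)
  by_cases h2 : b - N < m
  · have := h.norm_le_of_near hM x v (s := b) (t := m)
      (by rw [abs_sub_comm, abs_of_nonneg (by linarith [hm.2])]; linarith)
    exact this.trans (mul_le_mul_of_nonneg_left (le_max_right _ _) hM0)
  exfalso
  obtain ⟨r, hr, h3⟩ := h.exists_double_near hD x hv m
  rw [abs_le] at hr
  have h4 : ‖A x r v‖ ≤ ‖A x m v‖ := hmax ⟨by linarith, by linarith⟩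
  linarith [norm_nonneg (A x m v)]

/-- A bounded forward orbit halves (in sup) over each time `N`, hence decays exponentially. -/
lemma FwdBdd_decay_aux (h : IsAreaCocycle T A) (hD : Doubling A N)
    (x : X) {v : V2} (hv : v ≠ 0) {K : ℝ} (hK : ∀ t, 0 ≤ t → ‖A x t v‖ ≤ K) (k : ℕ) :
    ∀ t, k * N ≤ t → ‖A x t v‖ ≤ K / 2 ^ k := by
  by_cases hN : N < 0
  · obtain ⟨r, hr, -⟩ := hD x v hv
    linarith [abs_nonneg r]
  induction k with
  | zero => intro t ht; simpa using hK t (by simpa using ht)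
  | succ k ih =>
    intro t ht
    obtain ⟨r, hr, h2⟩ := h.exists_double_near hD x hv t
    rw [abs_le] at hr
    push_cast at ht
    have := ih r (by linarith)
    have h3 : K / 2 ^ (k + 1) = K / 2 ^ k / 2 := by rw [pow_succ]; field_simp
    rw [h3]; linarith

lemma norm_le_of_fwdBdd (h : IsAreaCocycle T A) (hD : Doubling A N) (hM : NormBound A N M)
    (hM1 : 1 ≤ M) (x : X) {v : V2} (hv : FwdBdd A x v) {t : ℝ} (ht : 0 ≤ t) :
    ‖A x t v‖ ≤ M * ‖v‖ := by
  rcases eq_or_ne v 0 with rfl | hv0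
  · simp
  obtain ⟨K, hK⟩ := hv
  have hpos : 0 < ‖v‖ := norm_pos_iff.2 hv0
  obtain ⟨k, hk⟩ := pow_unbounded_of_one_lt (K / ‖v‖) (one_lt_two)
  have hb := h.FwdBdd_decay_aux hD x hv0 hK k (max t (k * N)) (le_max_right _ _)
  have h1 := h.norm_le_max hD hM hM1 x hv0 (b := max t (k * N)) ⟨ht, le_max_left _ _⟩
  have h2 : K / 2 ^ k ≤ ‖v‖ := by
    rw [div_lt_iff₀ hpos] at hk
    rw [div_le_iff₀ (by positivity)]; linarith
  rwa [max_eq_left (hb.trans h2)] at h1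

lemma decay (h : IsAreaCocycle T A) (hD : Doubling A N) (hM : NormBound A N M)
    (hM1 : 1 ≤ M) (hN : 0 < N) (x : X) {v : V2} (hv : FwdBdd A x v) {t : ℝ} (ht : 0 ≤ t) :
    ‖A x t v‖ ≤ 2 * M * ((2 : ℝ) ^ (1 / N)) ^ (-t) * ‖v‖ := by
  rcases eq_or_ne v 0 with rfl | hv0
  · simp
  have h1 := h.FwdBdd_decay_aux hD x hv0 (K := M * ‖v‖)
    (fun t ht => h.norm_le_of_fwdBdd hD hM hM1 x hv ht) ⌊t / N⌋₊ t
    ((le_div_iff₀ hN).1 (Nat.floor_le (by positivity)))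
  refine h1.trans ?_
  have h2 : ((2 : ℝ) ^ (1 / N)) ^ (-t) = ((2 : ℝ) ^ (t / N))⁻¹ := by
    rw [← Real.rpow_mul (by norm_num), ← Real.rpow_neg (by norm_num)]
    congr 1; field_simp
  have h3 : (2 : ℝ) ^ (t / N) ≤ 2 * 2 ^ ⌊t / N⌋₊ := by
    have := (Real.rpow_le_rpow_left_iff (one_lt_two (α := ℝ))).2 (Nat.lt_floor_add_one (t / N)).le
    rwa [Real.rpow_add_one (by norm_num), Real.rpow_natCast, mul_comm] at this
  rw [h2, div_le_iff₀ (by positivity)]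
  have h4 : (0 : ℝ) < 2 ^ (t / N) := by positivity
  have h5 : 1 ≤ ((2 : ℝ) ^ (t / N))⁻¹ * (2 * 2 ^ ⌊t / N⌋₊) := by
    rw [← div_eq_inv_mul, one_le_div h4]; exact h3
  calc M * ‖v‖ = M * ‖v‖ * 1 := by ring
    _ ≤ M * ‖v‖ * (((2 : ℝ) ^ (t / N))⁻¹ * (2 * 2 ^ ⌊t / N⌋₊)) := by gcongr
    _ = _ := by ring

/-- The orbit of a unit vector not expanded by `Φ^n(x)` has norm at most `M` on `[0, n]` by
quasi-convexity; a limit of such vectors as `n → ∞` has a bounded forward orbit. -/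
lemma exists_fwdBdd (h : IsAreaCocycle T A) (hD : Doubling A N) (hM : NormBound A N M)
    (hM1 : 1 ≤ M) (x : X) : ∃ v, v ≠ 0 ∧ FwdBdd A x v := by
  have hcl := fun n : ℕ => (h.isClosed_norm_le (Set.Icc 0 (n : ℝ)) M).preimage
    (by fun_prop : Continuous fun v : Metric.sphere (0 : V2) 1 => (x, v))
  obtain ⟨p, hp⟩ := IsCompact.nonempty_iInter_of_sequence_nonempty_isCompact_isClosed _
    (fun n => by
      intro p hp t ht
      exact hp t ⟨ht.1, by push_cast; linarith [ht.2]⟩)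
    (fun n => by
      obtain ⟨v, hv, h1⟩ := exists_norm_le_of_area (h.area_eq x n)
      refine ⟨⟨v, by simpa using hv⟩, fun t ht => ?_⟩
      have := h.norm_le_max hD hM hM1 x (norm_ne_zero_iff.1 (by rw [hv]; exact one_ne_zero)) ht
      rw [hv, max_eq_left h1] at this
      simpa using this)
    (hcl 0).isCompact hcl
  rw [Set.mem_iInter] at hp
  refine ⟨p, ?_, M, fun t ht => ?_⟩
  · exact norm_ne_zero_iff.1 (by rw [mem_sphere_zero_iff_norm.1 p.2]; exact one_ne_zero)
  · obtain ⟨n, hn⟩ := exists_nat_ge t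
    exact hp n t ⟨ht, hn⟩

end IsAreaCocycle

lemma FwdBdd.smul {X : Type} {A : X → ℝ → V2 →L[ℝ] V2}
    {x : X} {v : V2} (h : FwdBdd A x v) (a : ℝ) : FwdBdd A x (a • v) := by
  obtain ⟨K, hK⟩ := h
  refine ⟨|a| * K, fun t ht => ?_⟩
  rw [map_smul, norm_smul, Real.norm_eq_abs]
  exact mul_le_mul_of_nonneg_left (hK t ht) (abs_nonneg a)

lemma FwdBdd.add {X : Type} {A : X → ℝ → V2 →L[ℝ] V2}
    {x : X} {v w : V2} (h : FwdBdd A x v) (h' : FwdBdd A x w) :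
    FwdBdd A x (v + w) := by
  obtain ⟨K, hK⟩ := h
  obtain ⟨K', hK'⟩ := h'
  refine ⟨K + K', fun t ht => ?_⟩
  rw [map_add]
  exact (norm_add_le _ _).trans (add_le_add (hK t ht) (hK' t ht))

namespace IsAreaCocycle

/-- Forward boundedness is invariant along the flow. -/
lemma fwdBdd_apply (h : IsAreaCocycle T A) {x : X} {v : V2} (hv : FwdBdd A x v) (s : ℝ) :
    FwdBdd A (T s x) (A x s v) := by
  obtain ⟨K, hK⟩ := hv
  -- for `s < 0` the initial piece of orbit over `[s, 0]` is bounded by compactness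
  obtain ⟨K', hK'⟩ := (isCompact_Icc (a := s) (b := 0)).exists_bound_of_continuousOn
    (h.continuous_norm x v).continuousOn
  refine ⟨max K K', fun t ht => ?_⟩
  rw [← h.add]
  rcases le_total 0 (s + t) with h1 | h1
  · exact (hK _ h1).trans (le_max_left _ _)
  · have := hK' (s + t) ⟨by linarith, h1⟩
    rw [norm_norm] at this
    exact this.trans (le_max_right _ _)

lemma eq_smul_of_fwdBdd (h : IsAreaCocycle T A) (hb : NoBoundedOrbit A) {N M : ℝ}
    (hD : Doubling A N) (hM : NormBound A N M) (hM1 : 1 ≤ M) {x : X} {v w : V2} (hv0 : v ≠ 0)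
    (hv : FwdBdd A x v) (hw : FwdBdd A x w) : ∃ a : ℝ, w = a • v := by
  refine eq_smul_of_area_eq_zero hv0 ?_
  by_contra hne
  -- otherwise a backward bounded vector would be a combination of `v` and `w`
  obtain ⟨u, hu0, K, hK⟩ := h.reverse.exists_fwdBdd hD.reverse hM.reverse hM1 x
  have hu : FwdBdd A x u := by
    have h1 := ((hv.smul (area u w)).add (hw.smul (area v u))).smul (area v w)⁻¹
    rwa [← area_smul_eq, smul_smul, inv_mul_cancel₀ hne, one_smul] at h1
  obtain ⟨K', hK'⟩ := hu
  refine hb ⟨x, u, hu0, max K K', fun t => ?_⟩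
  rcases le_total 0 t with h1 | h1
  · exact (hK' t h1).trans (le_max_right _ _)
  · have := hK (-t) (by linarith)
    beta_reduce at this
    rw [neg_neg] at this
    exact this.trans (le_max_left _ _)

/-- The forward bounded vectors form a continuous invariant line field. Continuity is a closed graph
argument: the condition `‖Φ^t(x) v‖ ≤ M` for `t ≥ 0` is closed and `M` does not depend on `x`. -/
lemma exists_line [CompactSpace X] (h : IsAreaCocycle T A) (hb : NoBoundedOrbit A) {N M : ℝ}
    (hD : Doubling A N) (hM : NormBound A N M) (hM1 : 1 ≤ M) :
    ∃ Λ : X → Projectivization ℝ V2, Continuous Λ ∧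
      (∀ x v, v ∈ (Λ x).submodule ↔ FwdBdd A x v) ∧
      ∀ x t, Submodule.map (A x t : V2 →ₗ[ℝ] V2) (Λ x).submodule = (Λ (T t x)).submodule := by
  choose e he0 he using fun x => h.exists_fwdBdd hD hM hM1 x
  have hmem : ∀ x v, v ∈ (Projectivization.mk ℝ (e x) (he0 x)).submodule ↔ FwdBdd A x v := by
    intro x v
    rw [Projectivization.submodule_mk, Submodule.mem_span_singleton]
    constructor
    · rintro ⟨a, rfl⟩; exact (he x).smul a
    · intro hv
      obtain ⟨a, ha⟩ := h.eq_smul_of_fwdBdd hb hD hM hM1 (he0 x) (he x) hv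
      exact ⟨a, ha.symm⟩
  refine ⟨fun x => Projectivization.mk ℝ (e x) (he0 x), ?_, hmem, fun x t => ?_⟩
  · have hs0 : ∀ v : Metric.sphere (0 : V2) 1, (v : V2) ≠ 0 := fun v =>
      norm_ne_zero_iff.1 (by rw [mem_sphere_zero_iff_norm.1 v.2]; exact one_ne_zero)
    have hπ : Continuous fun v : Metric.sphere (0 : V2) 1 =>
        Projectivization.mk ℝ (v : V2) (hs0 v) :=
      continuous_quotient_mk'.comp (continuous_subtype_val.subtype_mk hs0)
    rw [continuous_iff_isClosed]
    intro F hF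
    have hcl := (h.isClosed_norm_le (Set.Ici 0) M).inter ((hF.preimage hπ).preimage
      (continuous_snd : Continuous (Prod.snd : X × Metric.sphere (0 : V2) 1 → _)))
    convert (hcl.isCompact.image continuous_fst).isClosed using 1
    ext x
    constructor
    · intro hx
      have hp : 0 < ‖e x‖ := norm_pos_iff.2 (he0 x)
      have hn : ‖‖e x‖⁻¹ • e x‖ = 1 := by simp [norm_smul, hp.ne']
      refine ⟨(x, ⟨‖e x‖⁻¹ • e x, by simpa using hn⟩), ⟨fun t ht => ?_, ?_⟩, rfl⟩
      · have := h.norm_le_of_fwdBdd hD hM hM1 x ((he x).smul ‖e x‖⁻¹) ht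
        rwa [hn, mul_one] at this
      · change Projectivization.mk ℝ _ _ ∈ F
        change Projectivization.mk ℝ (e x) _ ∈ F at hx
        convert hx using 1
        rw [Projectivization.mk_eq_mk_iff']
        exact ⟨_, rfl⟩
    · rintro ⟨⟨y, v⟩, ⟨h1, h2⟩, rfl⟩
      change Projectivization.mk ℝ (e y) _ ∈ F
      change Projectivization.mk ℝ (v : V2) _ ∈ F at h2
      convert h2 using 1
      obtain ⟨a, ha⟩ := h.eq_smul_of_fwdBdd hb hD hM hM1 (hs0 v) ⟨M, fun t ht => h1 t ht⟩ (he y)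
      rw [Projectivization.mk_eq_mk_iff']
      exact ⟨a, ha.symm⟩
  · ext w
    rw [Submodule.mem_map, hmem]
    constructor
    · rintro ⟨v, hv, rfl⟩
      exact h.fwdBdd_apply ((hmem x v).1 hv) t
    · intro hw
      refine ⟨A (T t x) (-t) w, ?_, h.apply_neg x t w⟩
      rw [hmem]
      have := h.fwdBdd_apply hw (-t)
      rwa [← h.T_add, neg_add_cancel, h.T_zero] at this

/-! ### Uniform growth excludes bounded orbits -/

/-- Along an orbit with norm at least `δ`, the operator norm grows at most linearly. Writing the
orbit of a second vector `w` as `α u + β` with `β ⟂ u`, area preservation gives `‖β‖ ≤ 1 / δ`, and the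
coefficient `α` changes by at most `M / δ²` per unit of time. -/
lemma norm_le_linear (h : IsAreaCocycle T A) {M : ℝ} (hM : NormBound A 1 M) (hM1 : 1 ≤ M) {x : X}
    {u : V2} (hu : ‖u‖ = 1) {δ D l : ℝ} (hδ : 0 < δ) (hl : 0 ≤ l)
    (hlow : ∀ r ∈ Set.Icc 0 l, δ ≤ ‖A x r u‖) (hup : ‖A x l u‖ ≤ D) :
    ‖A x l‖ ≤ (1 + (l + 1) * (M / δ ^ 2)) * D + 1 / δ := by
  have hM0 : 0 ≤ M := by linarith
  have hD0 : 0 ≤ D := (norm_nonneg _).trans hup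
  refine ContinuousLinearMap.opNorm_le_of_unit_norm (by positivity) fun w hw => ?_
  set α : ℝ → ℝ := fun r => inner ℝ (A x r w) (A x r u) / ‖A x r u‖ ^ 2 with hα
  have hβ : ∀ r ∈ Set.Icc 0 l, ‖A x r w - α r • A x r u‖ ≤ 1 / δ := by
    intro r hr
    have hpos : 0 < ‖A x r u‖ := hδ.trans_le (hlow r hr)
    have hin : inner ℝ (A x r w - α r • A x r u) (A x r u) = 0 := by
      rw [inner_sub_left, real_inner_smul_left, real_inner_self_eq_norm_sq, hα]
      field_simp; ring
    have har : area (A x r w - α r • A x r u) (A x r u) = area w u := by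
      rw [← h.area_eq x r w u]; simp [area]; ring
    have h1 := area_sq_add_inner_sq (A x r w - α r • A x r u) (A x r u)
    have h2 := abs_area_le w u
    rw [hu, hw, mul_one] at h2
    rw [hin, har] at h1
    have h3 : (‖A x r w - α r • A x r u‖ * ‖A x r u‖) ^ 2 ≤ 1 ^ 2 := by
      rw [mul_pow, ← h1, ← sq_abs (area w u)]
      nlinarith [abs_nonneg (area w u)]
    have h4 := le_of_sq_le_sq h3 zero_le_one
    rw [le_div_iff₀ hδ]
    exact (mul_le_mul_of_nonneg_left (hlow r hr) (norm_nonneg _)).trans h4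
  have hstep : ∀ r ∈ Set.Icc 0 l, ∀ q ∈ Set.Icc 0 l, |q - r| ≤ 1 → |α q - α r| ≤ M / δ ^ 2 := by
    intro r hr q hq hqr
    have hpos : 0 < ‖A x q u‖ := hδ.trans_le (hlow q hq)
    have e1 : A x q w - α r • A x q u = A (T r x) (q - r) (A x r w - α r • A x r u) := by
      rw [map_sub, map_smul, ← h.add, ← h.add, add_sub_cancel]
    have e2 : ‖A x q w - α r • A x q u‖ ≤ M * (1 / δ) := by
      rw [e1]
      exact (ContinuousLinearMap.le_opNorm _ _).trans
        (mul_le_mul (hM _ _ hqr) (hβ r hr) (norm_nonneg _) hM0)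
    have e3 : α q - α r = inner ℝ (A x q w - α r • A x q u) (A x q u) / ‖A x q u‖ ^ 2 := by
      rw [inner_sub_left, real_inner_smul_left, real_inner_self_eq_norm_sq, hα]
      field_simp
    rw [e3, abs_div, abs_of_pos (by positivity : 0 < ‖A x q u‖ ^ 2), div_le_iff₀ (by positivity)]
    calc _ ≤ ‖A x q w - α r • A x q u‖ * ‖A x q u‖ := abs_real_inner_le_norm _ _
      _ ≤ M * (1 / δ) * ‖A x q u‖ := by gcongr
      _ ≤ M * (1 / δ) * ‖A x q u‖ * (‖A x q u‖ / δ) := by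
        apply le_mul_of_one_le_right (by positivity)
        rw [one_le_div hδ]; exact hlow q hq
      _ = _ := by field_simp
  have hα0 : |α 0| ≤ 1 := by
    simp only [hα, h.zero, hu, one_pow, div_one]
    simpa [hu, hw] using abs_real_inner_le_norm w u
  have hind : ∀ n : ℕ, ∀ r ∈ Set.Icc 0 l, r ≤ n → |α r| ≤ 1 + n * (M / δ ^ 2) := by
    intro n
    induction n with
    | zero =>
      intro r hr hrn
      have : r = 0 := le_antisymm (by simpa using hrn) hr.1
      simpa [this] using hα0
    | succ n ih =>
      intro r hr hrn
      push_cast at hrn ⊢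
      have hq : max 0 (r - 1) ∈ Set.Icc 0 l :=
        ⟨le_max_left _ _, max_le hl (by linarith [hr.2])⟩
      have h1 := ih _ hq (max_le (by positivity) (by linarith))
      have h2 := hstep _ hq r hr (by
        rw [abs_le]
        have := max_le hr.1 (by linarith : r - 1 ≤ r)
        have := le_max_right 0 (r - 1)
        constructor <;> linarith)
      have h3 := abs_add_le (α (max 0 (r - 1))) (α r - α (max 0 (r - 1)))
      rw [add_sub_cancel] at h3
      linarith
  have hαl : |α l| ≤ 1 + (l + 1) * (M / δ ^ 2) := by
    refine (hind ⌈l⌉₊ l ⟨hl, le_rfl⟩ (Nat.le_ceil l)).trans ?_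
    have := (Nat.ceil_lt_add_one hl).le
    gcongr
  calc ‖A x l w‖ = ‖α l • A x l u + (A x l w - α l • A x l u)‖ := by rw [add_sub_cancel]
    _ ≤ |α l| * ‖A x l u‖ + ‖A x l w - α l • A x l u‖ := by
      refine (norm_add_le _ _).trans ?_
      rw [norm_smul, Real.norm_eq_abs]
    _ ≤ _ := by
      have := hβ l ⟨hl, le_rfl⟩
      gcongr

end IsAreaCocycle

end Cocycle

/-- An exponential eventually exceeds a linear function. -/
lemma exists_linear_lt_exp {C lam : ℝ} (hC : 0 < C) (hlam : 1 < lam) (a b : ℝ) :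
    ∃ n : ℕ, ∀ l : ℝ, n ≤ l → a + b * l < C * lam ^ l := by
  have hlog := Real.log_pos hlam
  have h1 : Tendsto (fun l : ℝ => (a + b * l) / (C * lam ^ l)) atTop (nhds 0) := by
    have e1 := tendsto_rpow_mul_exp_neg_mul_atTop_nhds_zero 0 _ hlog
    have e2 := tendsto_rpow_mul_exp_neg_mul_atTop_nhds_zero 1 _ hlog
    have e3 := (e1.const_mul (a / C)).add (e2.const_mul (b / C))
    simp only [mul_zero, add_zero] at e3
    refine e3.congr fun l => ?_
    rw [Real.rpow_zero, Real.rpow_one, Real.rpow_def_of_pos (by linarith), neg_mul, Real.exp_neg]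
    field_simp
  obtain ⟨r, hr⟩ := eventually_atTop.1 (h1.eventually_lt_const zero_lt_one)
  obtain ⟨n, hn⟩ := exists_nat_ge r
  refine ⟨n, fun l hl => ?_⟩
  have h2 := hr l (hn.trans hl)
  rwa [div_lt_one (by have : 0 < lam := by linarith
                      positivity)] at h2

lemma exists_first_hit {g : ℝ → ℝ} (hg : Continuous g) {ε b : ℝ} (h0 : ε < g 0) (hb : 0 ≤ b)
    (hgb : g b < ε) : ∃ t, 0 ≤ t ∧ g t = ε ∧ ∀ r ∈ Set.Icc 0 t, ε ≤ g r := by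
  have hcomp : IsCompact (Set.Icc 0 b ∩ g ⁻¹' {ε}) :=
    isCompact_Icc.inter_right (isClosed_singleton.preimage hg)
  obtain ⟨c, hc, hce⟩ := intermediate_value_Icc' hb hg.continuousOn ⟨hgb.le, h0.le⟩
  obtain ⟨t, ht, hmin⟩ := hcomp.exists_isLeast ⟨c, hc, hce⟩
  refine ⟨t, ht.1.1, ht.2, fun r hr => ?_⟩
  by_contra! hlt
  obtain ⟨q, hq, hqe⟩ := intermediate_value_Icc' hr.1 hg.continuousOn ⟨hlt.le, h0.le⟩
  have hqt : t ≤ q := hmin ⟨⟨hq.1, hq.2.trans (hr.2.trans ht.1.2)⟩, hqe⟩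
  have h1 : r = t := le_antisymm hr.2 (hqt.trans hq.2)
  rw [h1] at hlt
  exact hlt.ne ht.2

section Growth

variable {X : Type} [MetricSpace X] [CompactSpace X] {T : ℝ → X → X} {A : X → ℝ → V2 →L[ℝ] V2}

/-- Uniform exponential growth excludes arbitrarily long windows on which an orbit has norm bounded
below by `δ` and final norm at most `D`, relative to its initial norm. -/
lemma IsAreaCocycle.windows_false (h : IsAreaCocycle T A) {C lam : ℝ} (hC : 0 < C) (hlam : 1 < lam)
    (hgrow : ∀ t x, C * lam ^ |t| ≤ ‖A x t‖) {δ D : ℝ} (hδ : 0 < δ)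
    (hw : ∀ n : ℕ, ∃ x u l, u ≠ 0 ∧ (n : ℝ) ≤ l ∧ (∀ r ∈ Set.Icc 0 l, δ * ‖u‖ ≤ ‖A x r u‖) ∧
      ‖A x l u‖ ≤ D * ‖u‖) : False := by
  obtain ⟨M, hM1, hM⟩ := h.exists_normBound 1
  obtain ⟨n, hn⟩ := exists_linear_lt_exp hC hlam ((1 + M / δ ^ 2) * D + 1 / δ) (M / δ ^ 2 * D)
  obtain ⟨x, u, l, hu, hl, hlow, hup⟩ := hw n
  have hl0 : 0 ≤ l := (Nat.cast_nonneg n).trans hl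
  have hpos : 0 < ‖u‖ := norm_pos_iff.2 hu
  have hsc : ∀ r, ‖A x r (‖u‖⁻¹ • u)‖ = ‖A x r u‖ / ‖u‖ := fun r => by
    rw [map_smul, norm_smul, norm_inv, norm_norm, ← div_eq_inv_mul]
  have h1 := h.norm_le_linear hM hM1 (x := x) (u := ‖u‖⁻¹ • u) (by simp [norm_smul, hpos.ne']) hδ
    hl0 (D := D) (fun r hr => by rw [hsc, le_div_iff₀ hpos]; exact hlow r hr)
    (by rw [hsc, div_le_iff₀ hpos]; exact hup)
  have h2 := hgrow l x
  rw [abs_of_nonneg hl0] at h2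
  have h3 := hn l hl
  have h4 : (1 + (l + 1) * (M / δ ^ 2)) * D + 1 / δ
      = (1 + M / δ ^ 2) * D + 1 / δ + M / δ ^ 2 * D * l := by ring
  linarith

/-- Under uniform growth, a bounded orbit has norms arbitrarily close to `0` in the future: otherwise
`[0, n]` would be a long window. -/
lemma IsAreaCocycle.exists_norm_lt (h : IsAreaCocycle T A) {C lam : ℝ} (hC : 0 < C)
    (hlam : 1 < lam) (hgrow : ∀ t x, C * lam ^ |t| ≤ ‖A x t‖) {x : X} {v : V2} (hv : v ≠ 0) {K : ℝ}
    (hK : ∀ t, ‖A x t v‖ ≤ K) {ε : ℝ} (hε : 0 < ε) : ∃ t, 0 ≤ t ∧ ‖A x t v‖ < ε := by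
  by_contra! hcon
  have hpos : 0 < ‖v‖ := norm_pos_iff.2 hv
  refine h.windows_false hC hlam hgrow (δ := ε / ‖v‖) (D := K / ‖v‖) (by positivity) fun n =>
    ⟨x, v, n, hv, le_rfl, fun r hr => ?_, ?_⟩
  · rw [div_mul_cancel₀ _ hpos.ne']; exact hcon r hr.1
  · rw [div_mul_cancel₀ _ hpos.ne']; exact hK n

theorem IsAreaCocycle.noBoundedOrbit (h : IsAreaCocycle T A) {C lam : ℝ} (hC : 0 < C)
    (hlam : 1 < lam) (hgrow : ∀ t x, C * lam ^ |t| ≤ ‖A x t‖) : NoBoundedOrbit A := by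
  rintro ⟨x, v, hv, K, hK⟩
  -- the windows run between the last visit before time `0` and the first visit after time `0` to
  -- a small norm `ε`
  refine h.windows_false hC hlam hgrow (δ := 1) (D := 1) one_pos fun n => ?_
  obtain ⟨m, hm, hmin⟩ := (isCompact_Icc (a := -(n : ℝ)) (b := n)).exists_isMinOn
    ⟨0, by simp, by simp⟩ (h.continuous_norm x v).continuousOn
  have hmpos : 0 < ‖A x m v‖ := norm_pos_iff.2 (h.apply_ne_zero x m hv)
  set ε := ‖A x m v‖ / 2 with hε
  have hε0 : 0 < ε := by positivity
  have hbig : ∀ r ∈ Set.Icc (-(n : ℝ)) n, ε < ‖A x r v‖ := fun r hr =>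
    lt_of_lt_of_le (by linarith) (hmin hr)
  obtain ⟨b, hb, hbε⟩ := h.exists_norm_lt hC hlam hgrow hv hK hε0
  obtain ⟨b', hb', hbε'⟩ := h.reverse.exists_norm_lt hC hlam
    (fun t x => by simpa using hgrow (-t) x) hv (fun t => hK (-t)) hε0
  have hz := hbig 0 (by simp)
  obtain ⟨t, ht0, ht, htm⟩ := exists_first_hit (h.continuous_norm x v) hz hb hbε
  obtain ⟨s, hs0, hs, hsm⟩ := exists_first_hit (h.reverse.continuous_norm x v) (by simpa using hz)
    hb' hbε'
  refine ⟨T (-s) x, A x (-s) v, s + t, h.apply_ne_zero _ _ hv, ?_, fun r hr => ?_, ?_⟩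
  · by_contra! hlt
    have := hbig t ⟨by linarith [(Nat.cast_nonneg n : (0 : ℝ) ≤ n)], by linarith⟩
    linarith
  · rw [← h.add, one_mul, hs]
    rcases le_total 0 (-s + r) with h1 | h1
    · exact htm _ ⟨h1, by linarith [hr.2]⟩
    · have := hsm (s - r) ⟨by linarith, by linarith [hr.1]⟩
      rwa [neg_sub, sub_eq_neg_add] at this
  · rw [← h.add, one_mul, hs, neg_add_cancel_left, ht]

end Growth

/-! ### The three equivalent conditions -/

lemma matCLM_isAreaCocycle {X : Type} [MetricSpace X]
    {T : ℝ → X → X}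
    (hTc : Continuous fun p : X × ℝ => T p.2 p.1)
    (hT0 : ∀ x, T 0 x = x)
    (hTadd : ∀ s t : ℝ, ∀ x, T (s + t) x = T s (T t x))
    {Φ : X → ℝ → Matrix (Fin 2) (Fin 2) ℝ}
    (hΦc : ∀ i j : Fin 2, Continuous fun p : X × ℝ => Φ p.1 p.2 i j)
    (hΦdet : ∀ x t, (Φ x t).det = 1)
    (hΦ0 : ∀ x, Φ x 0 = 1)
    (hΦcoc : ∀ x : X, ∀ s t : ℝ, Φ x (s + t) = Φ (T s x) t * Φ x s) :
    IsAreaCocycle T (fun x t => matCLM (Φ x t)) where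
  contT := hTc
  T_zero := hT0
  T_add := hTadd
  contA := by
    have h1 : Continuous (fun M : Matrix (Fin 2) (Fin 2) ℝ => matCLM M) :=
      LinearMap.continuous_of_finiteDimensional
        (Matrix.toEuclideanCLM (n := Fin 2) (𝕜 := ℝ)).toAlgEquiv.toLinearMap
    exact h1.comp (continuous_matrix hΦc)
  zero x v := by simp [hΦ0, matCLM]
  add x s t v := by rw [hΦcoc]; simp [matCLM]
  area_eq x t v w := by
    have := hΦdet x t
    rw [Matrix.det_fin_two] at this
    simp only [area, matCLM, Matrix.ofLp_toEuclideanCLM, Matrix.mulVec, dotProduct,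
      Fin.sum_univ_two]
    linear_combination (v 0 * w 1 - v 1 * w 0) * this

/-- The exponential splitting of condition (b), for a cocycle in operator form. -/
def HasSplitting {X : Type} [MetricSpace X] (T : ℝ → X → X) (A : X → ℝ → V2 →L[ℝ] V2) : Prop :=
  ∃ c : ℝ, 0 < c ∧ ∃ L : ℝ, 1 < L ∧
      ∃ Λs Λu : X → Projectivization ℝ V2,
        Continuous Λs ∧ Continuous Λu ∧
        (∀ (x : X) (t : ℝ),
          Submodule.map (A x t : V2 →ₗ[ℝ] V2) (Λs x).submodule = (Λs (T t x)).submodule) ∧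
        (∀ (x : X) (t : ℝ),
          Submodule.map (A x t : V2 →ₗ[ℝ] V2) (Λu x).submodule = (Λu (T t x)).submodule) ∧
        (∀ t : ℝ, 0 < t → ∀ x : X,
          (∀ v ∈ (Λs x).submodule, v ≠ 0 → ‖A x t v‖ ≤ c * L ^ (-t) * ‖v‖) ∧
          (∀ v ∈ (Λu x).submodule, v ≠ 0 → ‖A x (-t) v‖ ≤ c * L ^ (-t) * ‖v‖))

section Equivalences

variable {X : Type} [MetricSpace X] {T : ℝ → X → X} {A : X → ℝ → V2 →L[ℝ] V2}

theorem IsAreaCocycle.hasSplitting [CompactSpace X] (h : IsAreaCocycle T A)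
    (hb : NoBoundedOrbit A) : HasSplitting T A := by
  obtain ⟨N, hN, hD⟩ := h.exists_doubling hb
  obtain ⟨M, hM1, hM⟩ := h.exists_normBound N
  obtain ⟨Λs, hsc, hsm, hsi⟩ := h.exists_line hb hD hM hM1
  obtain ⟨Λu, huc, hum, hui⟩ := h.reverse.exists_line hb.reverse hD.reverse hM.reverse hM1
  refine ⟨2 * M, by linarith, 2 ^ (1 / N), Real.one_lt_rpow one_lt_two (by positivity), Λs, Λu,
    hsc, huc, hsi, fun x t => by simpa using hui x (-t), fun t ht x => ⟨fun v hv _ => ?_,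
    fun v hv _ => ?_⟩⟩
  · exact h.decay hD hM hM1 hN x ((hsm x v).1 hv) ht.le
  · exact h.reverse.decay hD.reverse hM.reverse hM1 hN x ((hum x v).1 hv) ht.le

/-- If an invariant line at `T^t x` is contracted by `Φ^{-t}(T^t x)`, the inverse of `Φ^t(x)`, then
`Φ^t(x)` has large norm. -/
lemma IsAreaCocycle.growth_of_line (h : IsAreaCocycle T A) {c L : ℝ} (hc : 0 < c) (hL : 1 < L)
    {Λ : X → Projectivization ℝ V2} {x : X} {t : ℝ}
    (hinv : Submodule.map (A x t : V2 →ₗ[ℝ] V2) (Λ x).submodule = (Λ (T t x)).submodule)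
    (hdec : ∀ v ∈ (Λ (T t x)).submodule, v ≠ 0 →
      ‖A (T t x) (-t) v‖ ≤ c * L ^ (-|t|) * ‖v‖) :
    1 / c * L ^ |t| ≤ ‖A x t‖ := by
  have hL0 : 0 < L := by linarith
  have hu0 := (Λ x).rep_nonzero
  have hu : (Λ x).rep ∈ (Λ x).submodule := by
    rw [Projectivization.submodule_eq]; exact Submodule.mem_span_singleton_self _
  set u := (Λ x).rep
  have hy : A x t u ∈ (Λ (T t x)).submodule := by
    rw [← hinv]; exact ⟨u, hu, rfl⟩
  have h1 := hdec _ hy (h.apply_ne_zero x t hu0)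
  rw [h.neg_apply, Real.rpow_neg hL0.le] at h1
  have hpos : 0 < ‖u‖ := norm_pos_iff.2 hu0
  have hp : 0 < L ^ |t| := by positivity
  have h2 : ‖u‖ ≤ c * (L ^ |t|)⁻¹ * ‖A x t‖ * ‖u‖ := by
    refine h1.trans ?_
    rw [mul_assoc _ ‖A x t‖]
    exact mul_le_mul_of_nonneg_left ((A x t).le_opNorm u) (by positivity)
  have h3 : 1 ≤ c * (L ^ |t|)⁻¹ * ‖A x t‖ := le_of_mul_le_mul_right (by linarith) hpos
  have h4 : c * (L ^ |t|)⁻¹ * ‖A x t‖ = ‖A x t‖ / (1 / c * L ^ |t|) := by field_simp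
  rw [h4, one_le_div (by positivity)] at h3
  exact h3

theorem IsAreaCocycle.growth_of_splitting (h : IsAreaCocycle T A) (hs : HasSplitting T A) :
    ∃ C : ℝ, 0 < C ∧ ∃ lam : ℝ, 1 < lam ∧ ∀ (t : ℝ) (x : X), C * lam ^ |t| ≤ ‖A x t‖ := by
  obtain ⟨c, hc, L, hL, Λs, Λu, -, -, hsi, hui, hdec⟩ := hs
  have hL0 : 0 < L := by linarith
  refine ⟨min 1 (1 / c), by positivity, L, hL, fun t x => ?_⟩
  rcases eq_or_ne t 0 with rfl | ht
  · have h1 : A x 0 = ContinuousLinearMap.id ℝ V2 := by ext1 v; exact h.zero x v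
    rw [h1, ContinuousLinearMap.norm_id]
    simp
  refine (mul_le_mul_of_nonneg_right (min_le_right _ _) (by positivity)).trans ?_
  rcases lt_or_gt_of_ne ht with ht | ht
  · refine h.growth_of_line hc hL (hsi x t) fun v hv hv0 => ?_
    rw [abs_of_neg ht]
    exact (hdec (-t) (by linarith) _).1 v hv hv0
  · refine h.growth_of_line hc hL (hui x t) fun v hv hv0 => ?_
    rw [abs_of_pos ht]
    exact (hdec t ht _).2 v hv hv0

end Equivalences

/-- Characterization of uniform hyperbolicity for continuous `SL(2,ℝ)`-cocycles over a
continuous flow on a compact metric space: uniform exponential growth (a) is equivalent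
to the existence of an invariant exponential splitting (b), which is equivalent to the
nonexistence of a bounded orbit (c). -/
theorem stmt12 (X : Type) [MetricSpace X] [CompactSpace X]
    (T : ℝ → X → X)
    (hTc : Continuous fun p : X × ℝ => T p.2 p.1)
    (hT0 : ∀ x, T 0 x = x)
    (hTadd : ∀ s t : ℝ, ∀ x, T (s + t) x = T s (T t x))
    (Φ : X → ℝ → Matrix (Fin 2) (Fin 2) ℝ)
    (hΦc : ∀ i j : Fin 2, Continuous fun p : X × ℝ => Φ p.1 p.2 i j)
    (hΦdet : ∀ x t, (Φ x t).det = 1)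
    (hΦ0 : ∀ x, Φ x 0 = 1)
    (hΦcoc : ∀ x : X, ∀ s t : ℝ, Φ x (s + t) = Φ (T s x) t * Φ x s) :
    -- (a) uniform exponential growth
    ((∃ C : ℝ, 0 < C ∧ ∃ lam : ℝ, 1 < lam ∧
        ∀ (t : ℝ) (x : X), C * lam ^ |t| ≤ ‖matCLM (Φ x t)‖)
    ↔
    -- (b) invariant exponential splitting
    (∃ c : ℝ, 0 < c ∧ ∃ L : ℝ, 1 < L ∧
      ∃ Λs Λu : X → Projectivization ℝ V2,
        Continuous Λs ∧ Continuous Λu ∧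
        (∀ (x : X) (t : ℝ),
          Submodule.map (matCLM (Φ x t) : V2 →ₗ[ℝ] V2) (Λs x).submodule
            = (Λs (T t x)).submodule) ∧
        (∀ (x : X) (t : ℝ),
          Submodule.map (matCLM (Φ x t) : V2 →ₗ[ℝ] V2) (Λu x).submodule
            = (Λu (T t x)).submodule) ∧
        (∀ t : ℝ, 0 < t → ∀ x : X,
          (∀ v ∈ (Λs x).submodule, v ≠ 0 →
            ‖matCLM (Φ x t) v‖ ≤ c * L ^ (-t) * ‖v‖) ∧
          (∀ v ∈ (Λu x).submodule, v ≠ 0 →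
            ‖matCLM (Φ x (-t)) v‖ ≤ c * L ^ (-t) * ‖v‖))))
    ∧
    -- (b) ↔ (c) no bounded orbit
    ((∃ c : ℝ, 0 < c ∧ ∃ L : ℝ, 1 < L ∧
      ∃ Λs Λu : X → Projectivization ℝ V2,
        Continuous Λs ∧ Continuous Λu ∧
        (∀ (x : X) (t : ℝ),
          Submodule.map (matCLM (Φ x t) : V2 →ₗ[ℝ] V2) (Λs x).submodule
            = (Λs (T t x)).submodule) ∧
        (∀ (x : X) (t : ℝ),
          Submodule.map (matCLM (Φ x t) : V2 →ₗ[ℝ] V2) (Λu x).submodule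
            = (Λu (T t x)).submodule) ∧
        (∀ t : ℝ, 0 < t → ∀ x : X,
          (∀ v ∈ (Λs x).submodule, v ≠ 0 →
            ‖matCLM (Φ x t) v‖ ≤ c * L ^ (-t) * ‖v‖) ∧
          (∀ v ∈ (Λu x).submodule, v ≠ 0 →
            ‖matCLM (Φ x (-t)) v‖ ≤ c * L ^ (-t) * ‖v‖)))
    ↔
    ¬ ∃ (x : X) (v : V2), v ≠ 0 ∧ ∃ C : ℝ, ∀ t : ℝ, ‖matCLM (Φ x t) v‖ ≤ C) := by
  have h := matCLM_isAreaCocycle hTc hT0 hTadd hΦc hΦdet hΦ0 hΦcoc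
  refine ⟨⟨?_, fun hs => h.growth_of_splitting hs⟩, ⟨fun hs => ?_, fun hb => h.hasSplitting hb⟩⟩
  · rintro ⟨C, hC, lam, hlam, hgrow⟩
    exact h.hasSplitting (h.noBoundedOrbit hC hlam hgrow)
  · obtain ⟨C, hC, lam, hlam, hgrow⟩ := h.growth_of_splitting hs
    exact h.noBoundedOrbit hC hlam hgrow

end
end

section
/- (a) Every limit-periodic sequence is almost-periodic. (b) An almost-periodic sequence V : ℤ → ℝ is limit-periodic if and only if hull(V) is totally disconnected. -/
/-!
Everything is read off from the function `k ↦ ‖S^k V - V‖`, because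
`‖S^a V - S^b V‖ = ‖S^(a-b) V - V‖`. The key reformulation (`isLimitPeriodicLp_iff`) is that `V` is
limit-periodic iff for each `ε > 0` some progression `pℤ`, `p ≥ 1`, consists of `ε`-almost periods.

* If `pℤ` consists of `ε`-almost periods, then the translates `S^0 V, …, S^(p-1) V` form an
  `ε`-net of the orbit, so the hull of a limit-periodic `V` is totally bounded and closed.
* For the same `p`, the integers `k` such that `S^(k + pm) V` comes arbitrarily close to `V` form a
  subgroup `J ⊇ pℤ` of `2ε`-almost periods. As `ℤ / pℤ` is finite, there is a gap `δ > 0` with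
  `‖S^k V - V‖ ≥ δ` off `J`. So the pieces of the orbit indexed by a coset of `J` and by its
  complement have disjoint thickenings, and a connected part of the hull, lying near one coset,
  has diameter `O(ε)`.
* Conversely, if the compact hull is totally disconnected, `V` has a clopen neighbourhood `U` in it
  of radius `ε`, at a distance `≥ δ` from its complement. Compactness gives a `p ≥ 1` with
  `‖S^p V - V‖ < δ`, and then the steps `S^(pk) V → S^(p(k±1)) V` never leave `U`.
-/

open Filter ENNReal

noncomputable section

/-- The shift of a bounded sequence: `(shiftLp k W) n = W (n + k)`. -/
noncomputable def shiftLp (k : ℤ) (W : lp (fun _ : ℤ => ℝ) ∞) : lp (fun _ : ℤ => ℝ) ∞ :=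
  ⟨fun n => W (n + k), by
    have h : BddAbove (Set.range fun n : ℤ => ‖(W : ∀ _ : ℤ, ℝ) n‖) :=
      memℓp_infty_iff.mp (lp.memℓp W)
    have hsub : (Set.range fun n : ℤ => ‖(W : ∀ _ : ℤ, ℝ) (n + k)‖)
        ⊆ Set.range fun n : ℤ => ‖(W : ∀ _ : ℤ, ℝ) n‖ := by
      rintro x ⟨n, rfl⟩
      exact ⟨n + k, rfl⟩
    exact memℓp_infty (h.mono hsub)⟩

/-- The hull of a bounded sequence: the closure in `ℓ∞(ℤ)` of the set of its
translates. -/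
noncomputable def hull (V : lp (fun _ : ℤ => ℝ) ∞) : Set (lp (fun _ : ℤ => ℝ) ∞) :=
  closure (Set.range fun k : ℤ => shiftLp k V)

/-- A bounded sequence is periodic if `W (n + p) = W n` for all `n`, for some `p ≥ 1`. -/
def IsPeriodicLp (W : lp (fun _ : ℤ => ℝ) ∞) : Prop :=
  ∃ p : ℤ, 1 ≤ p ∧ ∀ n : ℤ, (W : ∀ _ : ℤ, ℝ) (n + p) = (W : ∀ _ : ℤ, ℝ) n

/-- A bounded sequence is limit-periodic if it is a uniform (`ℓ∞`) limit of periodic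
sequences. -/
def IsLimitPeriodicLp (V : lp (fun _ : ℤ => ℝ) ∞) : Prop :=
  ∃ W : ℕ → lp (fun _ : ℤ => ℝ) ∞,
    (∀ j, IsPeriodicLp (W j)) ∧ Tendsto (fun j => ‖V - W j‖) atTop (nhds 0)

lemma shiftLp_apply (k : ℤ) (V : lp (fun _ : ℤ => ℝ) ∞) (n : ℤ) :
    (shiftLp k V : ∀ _ : ℤ, ℝ) n = (V : ∀ _ : ℤ, ℝ) (n + k) := rfl

lemma shiftLp_shiftLp (a b : ℤ) (V : lp (fun _ : ℤ => ℝ) ∞) :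
    shiftLp a (shiftLp b V) = shiftLp (a + b) V := by
  ext n
  simp only [shiftLp_apply, add_assoc]

lemma shiftLp_zero (V : lp (fun _ : ℤ => ℝ) ∞) : shiftLp 0 V = V := by
  ext n
  simp only [shiftLp_apply, add_zero]

lemma dist_shiftLp_le (k : ℤ) (V W : lp (fun _ : ℤ => ℝ) ∞) :
    dist (shiftLp k V) (shiftLp k W) ≤ dist V W := by
  rw [dist_eq_norm, dist_eq_norm]
  refine lp.norm_le_of_forall_le (norm_nonneg _) fun n => ?_
  exact lp.norm_apply_le_norm ENNReal.top_ne_zero (V - W) (n + k)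

lemma dist_shiftLp_shiftLp (a b : ℤ) (V : lp (fun _ : ℤ => ℝ) ∞) :
    dist (shiftLp a V) (shiftLp b V) = dist (shiftLp (a - b) V) V := by
  apply le_antisymm
  · have h := dist_shiftLp_le b (shiftLp (a - b) V) V
    rwa [shiftLp_shiftLp, add_sub_cancel] at h
  · have h := dist_shiftLp_le (-b) (shiftLp a V) (shiftLp b V)
    rwa [shiftLp_shiftLp, shiftLp_shiftLp, neg_add_cancel, shiftLp_zero, neg_add_eq_sub] at h

lemma dist_shiftLp_add_le (a b : ℤ) (V : lp (fun _ : ℤ => ℝ) ∞) :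
    dist (shiftLp (a + b) V) V ≤ dist (shiftLp a V) V + dist (shiftLp b V) V := by
  have h := dist_triangle (shiftLp (a + b) V) (shiftLp b V) V
  rwa [dist_shiftLp_shiftLp, add_sub_cancel_right] at h

lemma dist_shiftLp_neg (a : ℤ) (V : lp (fun _ : ℤ => ℝ) ∞) :
    dist (shiftLp (-a) V) V = dist (shiftLp a V) V := by
  have h := dist_shiftLp_shiftLp 0 a V
  rw [zero_sub, shiftLp_zero, dist_comm] at h
  exact h.symm

lemma shiftLp_mul_of_periodic {W : lp (fun _ : ℤ => ℝ) ∞} {p : ℤ}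
    (h : ∀ n : ℤ, (W : ∀ _ : ℤ, ℝ) (n + p) = (W : ∀ _ : ℤ, ℝ) n) (k : ℤ) :
    shiftLp (p * k) W = W := by
  ext n
  rw [shiftLp_apply, mul_comm]
  exact (show Function.Periodic (W : ∀ _ : ℤ, ℝ) p from h).int_mul k n

/-- A sequence is limit-periodic iff for every `ε > 0` all multiples of some `p ≥ 1` are
`ε`-almost periods. -/
lemma isLimitPeriodicLp_iff (V : lp (fun _ : ℤ => ℝ) ∞) :
    IsLimitPeriodicLp V ↔
      ∀ ε > 0, ∃ p : ℤ, 1 ≤ p ∧ ∀ k : ℤ, dist (shiftLp (p * k) V) V ≤ ε := by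
  constructor
  · rintro ⟨W, hW, hlim⟩ ε hε
    obtain ⟨j, hj⟩ := (hlim.eventually_lt_const (half_pos hε)).exists
    obtain ⟨p, hp, hper⟩ := hW j
    refine ⟨p, hp, fun k => ?_⟩
    have h1 := dist_shiftLp_le (p * k) V (W j)
    rw [shiftLp_mul_of_periodic hper] at h1
    have h2 := dist_triangle_right (shiftLp (p * k) V) V (W j)
    rw [← dist_eq_norm] at hj
    linarith
  · intro h
    have key : ∀ ε > 0, ∃ W, IsPeriodicLp W ∧ ‖V - W‖ ≤ ε := by
      intro ε hε
      obtain ⟨p, hp, hper⟩ := h ε hε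
      -- The periodic approximant repeats the values of `V` on `{0, …, p - 1}`.
      have hmem : Memℓp (fun n : ℤ => (V : ∀ _ : ℤ, ℝ) (n % p)) ∞ := by
        refine memℓp_infty ⟨‖V‖, ?_⟩
        rintro x ⟨n, rfl⟩
        exact lp.norm_apply_le_norm ENNReal.top_ne_zero V (n % p)
      refine ⟨⟨_, hmem⟩, ⟨p, hp, fun n => ?_⟩, ?_⟩
      · change (V : ∀ _ : ℤ, ℝ) ((n + p) % p) = (V : ∀ _ : ℤ, ℝ) (n % p)
        rw [Int.add_emod_right]
      · refine lp.norm_le_of_forall_le hε.le fun n => ?_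
        have h1 := lp.norm_apply_le_norm ENNReal.top_ne_zero
          (shiftLp (p * (n / p)) V - V) (n % p)
        rw [← dist_eq_norm] at h1
        refine le_trans (le_of_eq ?_) (h1.trans (hper (n / p)))
        change ‖(V : ∀ _ : ℤ, ℝ) n - (V : ∀ _ : ℤ, ℝ) (n % p)‖ =
          ‖(V : ∀ _ : ℤ, ℝ) (n % p + p * (n / p)) - (V : ∀ _ : ℤ, ℝ) (n % p)‖
        rw [Int.emod_add_mul_ediv]
    choose! W hW hVW using key
    refine ⟨fun j : ℕ => W (1 / ((j : ℝ) + 1)), fun j => hW _ Nat.one_div_pos_of_nat, ?_⟩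
    exact squeeze_zero (fun _ => norm_nonneg _) (fun j => hVW _ Nat.one_div_pos_of_nat)
      tendsto_one_div_add_atTop_nhds_zero_nat

lemma isCompact_hull_of_isLimitPeriodicLp {V : lp (fun _ : ℤ => ℝ) ∞}
    (hV : IsLimitPeriodicLp V) : IsCompact (hull V) := by
  rw [isLimitPeriodicLp_iff] at hV
  refine TotallyBounded.isCompact_of_isClosed (TotallyBounded.closure ?_) isClosed_closure
  rw [Metric.totallyBounded_iff]
  intro ε hε
  obtain ⟨p, hp, hper⟩ := hV (ε / 2) (half_pos hε)
  refine ⟨(fun k : ℤ => shiftLp k V) '' Set.Ico 0 p, (Set.finite_Ico 0 p).image _, ?_⟩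
  rintro _ ⟨k, rfl⟩
  refine Set.mem_biUnion (Set.mem_image_of_mem _
    ⟨Int.emod_nonneg k (by omega), Int.emod_lt_of_pos k (by omega)⟩) ?_
  have h : k - k % p = p * (k / p) := by
    have := Int.emod_add_mul_ediv k p
    omega
  rw [Metric.mem_ball, dist_shiftLp_shiftLp, h]
  linarith [hper (k / p)]

/-- The subgroup of those `k` for which `S^(k + pm) V`, `m ∈ ℤ`, comes arbitrarily close to `V`. -/
def returnSubgroup (V : lp (fun _ : ℤ => ℝ) ∞) (p : ℤ) : AddSubgroup ℤ where
  carrier := {k | ∀ η > 0, ∃ m : ℤ, dist (shiftLp (k + p * m) V) V < η}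
  zero_mem' η hη := ⟨0, by simpa [shiftLp_zero] using hη⟩
  add_mem' {a b} ha hb η hη := by
    obtain ⟨m, hm⟩ := ha (η / 2) (half_pos hη)
    obtain ⟨l, hl⟩ := hb (η / 2) (half_pos hη)
    refine ⟨m + l, ?_⟩
    have h := dist_shiftLp_add_le (a + p * m) (b + p * l) V
    rw [show a + b + p * (m + l) = a + p * m + (b + p * l) by ring]
    linarith
  neg_mem' {a} ha η hη := by
    obtain ⟨m, hm⟩ := ha η hη
    refine ⟨-m, ?_⟩
    rwa [show -a + p * -m = -(a + p * m) by ring, dist_shiftLp_neg]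

lemma mem_returnSubgroup {V : lp (fun _ : ℤ => ℝ) ∞} {p k : ℤ} :
    k ∈ returnSubgroup V p ↔ ∀ η > 0, ∃ m : ℤ, dist (shiftLp (k + p * m) V) V < η := Iff.rfl

lemma dist_le_of_mem_returnSubgroup {V : lp (fun _ : ℤ => ℝ) ∞} {p k : ℤ} {ε : ℝ} (hε : 0 < ε)
    (hper : ∀ k : ℤ, dist (shiftLp (p * k) V) V ≤ ε) (hk : k ∈ returnSubgroup V p) :
    dist (shiftLp k V) V ≤ 2 * ε := by
  obtain ⟨m, hm⟩ := hk ε hε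
  have h := dist_shiftLp_add_le (k + p * m) (p * -m) V
  rw [show k + p * m + p * -m = k by ring] at h
  linarith [hper (-m)]

/-- Outside `returnSubgroup V p` the translates of `V` keep a uniform distance from `V`, because
there are only finitely many classes modulo `p`. -/
lemma exists_gap (V : lp (fun _ : ℤ => ℝ) ∞) {p : ℤ} (hp : 1 ≤ p) {ε : ℝ} (hε : 0 < ε) :
    ∃ δ > 0, δ ≤ ε ∧ ∀ k : ℤ, dist (shiftLp k V) V < δ → k ∈ returnSubgroup V p := by
  have hev : ∀ᶠ δ in nhdsWithin (0 : ℝ) (Set.Ioi 0), ∀ i ∈ Finset.Ico 0 p,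
      i ∉ returnSubgroup V p → ∀ m : ℤ, δ ≤ dist (shiftLp (i + p * m) V) V := by
    rw [eventually_all_finset]
    intro i _
    by_cases hi : i ∈ returnSubgroup V p
    · exact Eventually.of_forall fun _ h => absurd hi h
    · have hi' := hi
      rw [mem_returnSubgroup] at hi'
      push Not at hi'
      obtain ⟨η, hη, hm⟩ := hi'
      filter_upwards [Ioc_mem_nhdsGT hη] with δ hδ _ m
      exact hδ.2.trans (hm m)
  obtain ⟨δ, hδ, hδ'⟩ := (hev.and (Ioc_mem_nhdsGT hε)).exists
  refine ⟨δ, hδ'.1, hδ'.2, fun k hk => ?_⟩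
  by_contra hkJ
  -- Membership only depends on the class modulo `p`, as `m` ranges over all of `ℤ`.
  have hr : k % p ∉ returnSubgroup V p := by
    intro hr
    apply hkJ
    intro η hη
    obtain ⟨m, hm⟩ := hr η hη
    refine ⟨m - k / p, ?_⟩
    rwa [show k + p * (m - k / p) = k % p + p * m by
      linear_combination -(Int.emod_add_mul_ediv k p)]
  have h := hδ (k % p) (Finset.mem_Ico.2
    ⟨Int.emod_nonneg k (by omega), Int.emod_lt_of_pos k (by omega)⟩) hr (k / p)
  rw [Int.emod_add_mul_ediv] at h
  linarith

/-- A preconnected part of the hull of a limit-periodic sequence has arbitrarily small diameter: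
it cannot leave the neighbourhood of the part of the orbit indexed by one coset of
`returnSubgroup V p`. -/
lemma isTotallyDisconnected_hull {V : lp (fun _ : ℤ => ℝ) ∞}
    (hV : IsLimitPeriodicLp V) : IsTotallyDisconnected (hull V) := by
  rw [isLimitPeriodicLp_iff] at hV
  intro t ht hconn x hx y hy
  suffices h : ∀ ε > 0, dist x y ≤ 4 * ε by
    refine dist_le_zero.1 (le_of_forall_pos_le_add fun ε hε => ?_)
    linarith [h (ε / 4) (by linarith)]
  intro ε hε
  obtain ⟨p, hp, hper⟩ := hV ε hε
  obtain ⟨δ, hδ, hδε, hgap⟩ := exists_gap V hp hε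
  have hnear : ∀ z ∈ t, ∃ k : ℤ, dist z (shiftLp k V) < δ / 2 := by
    intro z hz
    obtain ⟨_, ⟨k, rfl⟩, hk⟩ := Metric.mem_closure_iff.1 (ht hz) (δ / 2) (half_pos hδ)
    exact ⟨k, hk⟩
  obtain ⟨k₀, hk₀⟩ := hnear x hx
  let A : Set ℤ := {k | k - k₀ ∈ returnSubgroup V p}
  let orb : Set ℤ → Set (lp (fun _ : ℤ => ℝ) ∞) := fun s =>
    Metric.thickening (δ / 2) ((fun k : ℤ => shiftLp k V) '' s)
  have horb : ∀ s z, z ∈ orb s ↔ ∃ k ∈ s, dist z (shiftLp k V) < δ / 2 := by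
    intro s z
    simp [orb, Metric.mem_thickening_iff]
  have hdisj : Disjoint (orb A) (orb Aᶜ) := by
    rw [Set.disjoint_left]
    intro z hz hz'
    obtain ⟨a, ha, hza⟩ := (horb _ _).1 hz
    obtain ⟨b, hb, hzb⟩ := (horb _ _).1 hz'
    have hab : dist (shiftLp (a - b) V) V < δ := by
      rw [← dist_shiftLp_shiftLp]
      linarith [dist_triangle_left (shiftLp a V) (shiftLp b V) z]
    apply hb
    have h := (returnSubgroup V p).sub_mem ha (hgap _ hab)
    rwa [show a - k₀ - (a - b) = b - k₀ by ring] at h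
  have hsub : t ⊆ orb A := by
    refine IsPreconnected.subset_left_of_subset_union Metric.isOpen_thickening
      Metric.isOpen_thickening hdisj (fun z hz => ?_) ⟨x, hx, (horb _ _).2 ⟨k₀, ?_, hk₀⟩⟩ hconn
    · obtain ⟨k, hk⟩ := hnear z hz
      by_cases hkA : k ∈ A
      · exact Or.inl ((horb _ _).2 ⟨k, hkA, hk⟩)
      · exact Or.inr ((horb _ _).2 ⟨k, hkA, hk⟩)
    · change k₀ - k₀ ∈ returnSubgroup V p
      rw [sub_self]
      exact zero_mem _
  obtain ⟨a, ha, hya⟩ := (horb _ _).1 (hsub hy)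
  have h1 := dist_le_of_mem_returnSubgroup hε hper ha
  rw [← dist_shiftLp_shiftLp] at h1
  have h2 := dist_triangle4 x (shiftLp k₀ V) (shiftLp a V) y
  rw [dist_comm (shiftLp k₀ V), dist_comm (shiftLp a V) y] at h2
  linarith

lemma shiftLp_mem_hull (k : ℤ) (V : lp (fun _ : ℤ => ℝ) ∞) : shiftLp k V ∈ hull V :=
  subset_closure ⟨k, rfl⟩

/-- The indices of two late terms in a convergent subsequence of translates differ by such a `p`. -/
lemma exists_almost_period {V : lp (fun _ : ℤ => ℝ) ∞} (hc : IsCompact (hull V)) {δ : ℝ}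
    (hδ : 0 < δ) : ∃ p : ℤ, 1 ≤ p ∧ dist (shiftLp p V) V < δ := by
  obtain ⟨_, _, φ, hφ, hlim⟩ := hc.tendsto_subseq (x := fun n : ℕ => shiftLp (n : ℤ) V)
    fun n => shiftLp_mem_hull n V
  obtain ⟨N, hN⟩ := Metric.cauchySeq_iff.1 hlim.cauchySeq δ hδ
  have h := hN (N + 1) (Nat.le_succ N) N le_rfl
  have hlt := hφ (Nat.lt_succ_self N)
  refine ⟨(φ (N + 1) : ℤ) - φ N, by simp only [Nat.succ_eq_add_one] at hlt; omega, ?_⟩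
  rw [← dist_shiftLp_shiftLp]
  exact h

lemma isLimitPeriodicLp_of_isTotallyDisconnected {V : lp (fun _ : ℤ => ℝ) ∞}
    (hc : IsCompact (hull V)) (htd : IsTotallyDisconnected (hull V)) : IsLimitPeriodicLp V := by
  rw [isLimitPeriodicLp_iff]
  intro ε hε
  have : CompactSpace (hull V) := isCompact_iff_compactSpace.1 hc
  have : TotallyDisconnectedSpace (hull V) := totallyDisconnectedSpace_subtype_iff.2 htd
  let x : ℤ → hull V := fun k => ⟨shiftLp k V, shiftLp_mem_hull k V⟩
  obtain ⟨U, hU, hxU, hUε⟩ := compact_exists_isClopen_in_isOpen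
    (Metric.isOpen_ball (x := x 0) (ε := ε)) (Metric.mem_ball_self hε)
  obtain ⟨δ, hδ, hthick⟩ :=
    hU.isClosed.isCompact.exists_thickening_subset_open hU.isOpen subset_rfl
  obtain ⟨p, hp, hpδ⟩ := exists_almost_period hc hδ
  have step : ∀ a b : ℤ, dist (shiftLp (a - b) V) V < δ → x b ∈ U → x a ∈ U := by
    intro a b hab hb
    refine hthick (Metric.mem_thickening_iff.2 ⟨x b, hb, ?_⟩)
    rw [← dist_shiftLp_shiftLp] at hab
    exact hab
  have hall : ∀ k : ℤ, x (p * k) ∈ U := by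
    intro k
    induction k using Int.induction_on with
    | zero => simpa using hxU
    | succ i ih =>
      refine step _ _ ?_ ih
      rwa [show p * ((i : ℤ) + 1) - p * i = p by ring]
    | pred i ih =>
      refine step _ _ ?_ ih
      rwa [show p * (-(i : ℤ) - 1) - p * -i = -p by ring, dist_shiftLp_neg]
  refine ⟨p, hp, fun k => ?_⟩
  have h : dist (shiftLp (p * k) V) (shiftLp 0 V) < ε := hUε (hall k)
  rw [shiftLp_zero] at h
  exact h.le

/-- (a) Every limit-periodic sequence is almost-periodic (has compact hull);
(b) an almost-periodic sequence is limit-periodic if and only if its hull is totally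
disconnected. -/
theorem stmt14 :
    (∀ V : lp (fun _ : ℤ => ℝ) ∞, IsLimitPeriodicLp V → IsCompact (hull V)) ∧
    (∀ V : lp (fun _ : ℤ => ℝ) ∞, IsCompact (hull V) →
      (IsLimitPeriodicLp V ↔ IsTotallyDisconnected (hull V))) := by
  exact ⟨fun _ hV => isCompact_hull_of_isLimitPeriodicLp hV, fun _ hc =>
    ⟨isTotallyDisconnected_hull, isLimitPeriodicLp_of_isTotallyDisconnected hc⟩⟩

end
end
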